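/- Let B = A₀ ⊆ A₁ ⊆ ⋯ ⊆ A_{s-1} ⊆ A_s = A be a chain of subalgebras (with the same identity) of an Artin algebra A such that rad(A_{i-1}) is a left ideal of A_i for all 1 ≤ i ≤ s, where s is a positive integer, and suppose that A is 1-syzygy-finite. If the quotient algebra B/(rad(A_{s-1})⋯rad(A₁)rad(A₀)) is B-syzygy-finite (for example, representation-finite), then the finitistic dimension of B is finite. -/

import Mathlib

universe u

open TensorProduct

section Basic

variable (Λ : Type u) [Ring Λ]

/-- `ProjDimLE Λ n M` : the module `M` admits a projective resolution of length `≤ n`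
by finitely generated projective `Λ`-modules. -/
def ProjDimLE : ℕ → ModuleCat.{u} Λ → Prop
  | 0, M => Module.Projective Λ M
  | n + 1, M => ∃ (P : ModuleCat.{u} Λ) (g : P →ₗ[Λ] M),
      Module.Projective Λ P ∧ Module.Finite Λ P ∧ Function.Surjective g ∧
      ProjDimLE n (ModuleCat.of Λ (LinearMap.ker g))

/-- The finitistic dimension of `Λ` (computed on finitely generated modules) is finite. -/
def FinFinDim : Prop :=
  ∃ n : ℕ, ∀ M : ModuleCat.{u} Λ, Module.Finite Λ M →
    (∃ k : ℕ, ProjDimLE Λ k M) → ProjDimLE Λ n M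

/-- A module is indecomposable. -/
def ModIndec (M : ModuleCat.{u} Λ) : Prop :=
  Nontrivial M ∧ ∀ N₁ N₂ : Submodule Λ M, IsCompl N₁ N₂ → N₁ = ⊥ ∨ N₂ = ⊥

/-- A class of modules has only finitely many isomorphism classes of indecomposables. -/
def ClassRepFinite (C : ModuleCat.{u} Λ → Prop) : Prop :=
  ∃ (k : ℕ) (N : Fin k → ModuleCat.{u} Λ),
    ∀ M : ModuleCat.{u} Λ, C M → ModIndec Λ M → ∃ i, Nonempty (M ≃ₗ[Λ] N i)

/-- `Λ` is representation-finite. -/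
def RepFinite : Prop :=
  ClassRepFinite Λ (fun M => Module.Finite Λ M)

/-- `X` belongs to `add N`: it is a direct summand of a finite direct sum of copies of `N`. -/
def InAdd (N X : ModuleCat.{u} Λ) : Prop :=
  ∃ (k : ℕ) (i : X →ₗ[Λ] (Fin k → N)) (p : (Fin k → N) →ₗ[Λ] X),
    p.comp i = LinearMap.id

/-- A submodule is superfluous (small). -/
def IsSuperfluous {M : ModuleCat.{u} Λ} (N : Submodule Λ M) : Prop :=
  ∀ L : Submodule Λ M, L ⊔ N = ⊤ → L = ⊤

/-- `K` is (isomorphic to) the kernel of a projective cover of `M`, i.e. a first syzygy. -/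
def IsSyzygyOf (K M : ModuleCat.{u} Λ) : Prop :=
  ∃ (P : ModuleCat.{u} Λ) (g : P →ₗ[Λ] M), Module.Projective Λ P ∧ Module.Finite Λ P ∧
    Function.Surjective g ∧ IsSuperfluous Λ (LinearMap.ker g) ∧
    Nonempty (K ≃ₗ[Λ] LinearMap.ker g)

/-- `K` is an `n`-th syzygy of `M`. -/
def IsNthSyzygy : ℕ → ModuleCat.{u} Λ → ModuleCat.{u} Λ → Prop
  | 0, K, M => Nonempty (K ≃ₗ[Λ] M)
  | n + 1, K, M => ∃ K' : ModuleCat.{u} Λ, IsNthSyzygy n K' M ∧ IsSyzygyOf Λ K K'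

/-- A class `C` of modules is `m`-syzygy-finite. -/
def MSyzygyFiniteClass (m : ℕ) (C : ModuleCat.{u} Λ → Prop) : Prop :=
  ∃ N : ModuleCat.{u} Λ, Module.Finite Λ N ∧
    ∀ X, C X → ∀ K, IsNthSyzygy Λ m K X → InAdd Λ N K

/-- A class `C` of modules is syzygy-finite. -/
def SyzygyFiniteClass (C : ModuleCat.{u} Λ → Prop) : Prop :=
  ∃ m : ℕ, MSyzygyFiniteClass Λ m C

/-- `Λ` is 1-syzygy-finite. -/
def OneSyzygyFinite : Prop :=
  MSyzygyFiniteClass Λ 1 (fun X => Module.Finite Λ X)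

/-- `Λ` is syzygy-finite. -/
def AlgSyzygyFinite : Prop :=
  SyzygyFiniteClass Λ (fun X => Module.Finite Λ X)

/-- The Jacobson radical of `Λ` (intersection of the maximal left ideals). -/
def jacobsonRad : Ideal Λ := sInf {I : Ideal Λ | I.IsMaximal}

end Basic

/-- The Jacobson radical of a subalgebra, as a subset of the ambient algebra. -/
def radSet {R A : Type u} [CommRing R] [Ring A] [Algebra R A] (S : Subalgebra R A) : Set A :=
  Subtype.val '' ((jacobsonRad ↥S : Ideal ↥S) : Set ↥S)

section Rel

variable {R : Type u} [CommRing R] {B A : Type u} [Ring B] [Ring A]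
  [Algebra R B] [Algebra R A] (φ : B →ₐ[R] A)

/-- The tensor product `A ⊗_B X` of the (A,B)-bimodule `A` with a left `A`-module `X`
(viewed as a `B`-module via `φ`), realized as a quotient of `A ⊗_R X`. -/
noncomputable def relTensor (X : ModuleCat.{u} A) : ModuleCat.{u} A :=
  letI : Module R X := Module.compHom X (algebraMap R A)
  ModuleCat.of A ((A ⊗[R] X) ⧸ Submodule.span A
    {z : A ⊗[R] X | ∃ (a : A) (b : B) (x : X),
      z = (a * φ b) ⊗ₜ[R] x - a ⊗ₜ[R] (φ b • x)})

/-- `X` is `(A,B)`-projective: a direct summand of `A ⊗_B X`. -/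
noncomputable def RelProjective (X : ModuleCat.{u} A) : Prop :=
  ∃ (i : X →ₗ[A] relTensor φ X) (p : relTensor φ X →ₗ[A] X), p.comp i = LinearMap.id

/-- The map `g` admits a `B`-linear map `h` with `g ∘ h ∘ g = g`
(this encodes `(A,B)`-exactness of the corresponding short exact sequence). -/
def RelSplitB {P X : ModuleCat.{u} A} (g : P →ₗ[A] X) : Prop :=
  ∃ h : X →+ P, (∀ (b : B) (x : X), h (φ b • x) = φ b • h x) ∧
    ∀ p : P, g (h (g p)) = g p

/-- `RelProjDimLE φ n X` : `X` has an `(A,B)`-exact resolution of length `≤ n` by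
finitely generated `(A,B)`-projective modules, i.e. relative projective dimension `≤ n`. -/
noncomputable def RelProjDimLE : ℕ → ModuleCat.{u} A → Prop
  | 0, X => RelProjective φ X
  | n + 1, X => ∃ (P : ModuleCat.{u} A) (g : P →ₗ[A] X),
      RelProjective φ P ∧ Module.Finite A P ∧ Function.Surjective g ∧ RelSplitB φ g ∧
      RelProjDimLE n (ModuleCat.of A (LinearMap.ker g))

/-- Restriction of scalars along `φ` of an `A`-module, as an object of `ModuleCat B`. -/
def resMod (X : ModuleCat.{u} A) : ModuleCat.{u} B :=
  @ModuleCat.of B _ X _ (Module.compHom X φ.toRingHom)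

/-- The right `B`-module structure on `A` induced by `φ`. -/
def rightModB : Module Bᵐᵒᵖ A :=
  Module.compHom A (RingHom.op φ.toRingHom)

end Rel

section Homological

open CategoryTheory Abelian

variable {Λ : Type u} [Ring Λ]
variable {X Y Z W : Type u} [AddCommGroup X] [Module Λ X] [AddCommGroup Y] [Module Λ Y]
  [AddCommGroup Z] [Module Λ Z] [AddCommGroup W] [Module Λ W]

/-- `0 → X → Y → Z → 0` is a short exact sequence of modules. -/
structure IsSES (f : X →ₗ[Λ] Y) (g : Y →ₗ[Λ] Z) : Prop where
  inj : Function.Injective f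
  exact : Function.Exact f g
  surj : Function.Surjective g

variable (Λ X) in
/-- The projective dimension of the module `X` is smaller than `n`. -/
abbrev PDLT (n : ℕ) : Prop := HasProjectiveDimensionLT (ModuleCat.of Λ X) n

namespace IsSES

variable {f : X →ₗ[Λ] Y} {g : Y →ₗ[Λ] Z}

theorem shortExact (h : IsSES f g) :
    (ShortComplex.mk (ModuleCat.ofHom f) (ModuleCat.ofHom g)
      (by rw [← ModuleCat.ofHom_comp, h.exact.linearMap_comp_eq_zero]; rfl)).ShortExact :=
  ModuleCat.shortComplex_shortExact _ h.exact h.inj h.surj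

theorem pdlt_middle (h : IsSES f g) {n : ℕ} (h1 : PDLT Λ X n) (h3 : PDLT Λ Z n) : PDLT Λ Y n :=
  h.shortExact.hasProjectiveDimensionLT_X₂ n h1 h3

theorem pdlt_right (h : IsSES f g) {n : ℕ} (h1 : PDLT Λ X n) (h2 : PDLT Λ Y (n + 1)) :
    PDLT Λ Z (n + 1) :=
  h.shortExact.hasProjectiveDimensionLT_X₃ n h1 h2

theorem pdlt_left (h : IsSES f g) {n : ℕ} (h2 : PDLT Λ Y n) (h3 : PDLT Λ Z (n + 1)) :
    PDLT Λ X n :=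
  h.shortExact.hasProjectiveDimensionLT_X₁ n h2 h3

end IsSES

theorem PDLT.of_retract {n : ℕ} (h : PDLT Λ Y n) (i : X →ₗ[Λ] Y) (p : Y →ₗ[Λ] X)
    (hpi : p ∘ₗ i = LinearMap.id) : PDLT Λ X n :=
  Retract.hasProjectiveDimensionLT (X := ModuleCat.of Λ X) (Y := ModuleCat.of Λ Y)
    ⟨ModuleCat.ofHom i, ModuleCat.ofHom p, by rw [← ModuleCat.ofHom_comp, hpi]; rfl⟩ n

theorem PDLT.of_equiv {n : ℕ} (h : PDLT Λ Y n) (e : X ≃ₗ[Λ] Y) : PDLT Λ X n :=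
  h.of_retract e.toLinearMap e.symm.toLinearMap (by ext; simp)

theorem PDLT.mono {m n : ℕ} (h : PDLT Λ X m) (hmn : m ≤ n) : PDLT Λ X n :=
  hasProjectiveDimensionLT_of_ge _ m n hmn

theorem pdlt_one_iff : PDLT Λ X 1 ↔ Module.Projective Λ X := by
  rw [IsProjective.iff_projective X, projective_iff_hasProjectiveDimensionLT_one]

theorem PDLT.of_subsingleton [Subsingleton X] (n : ℕ) : PDLT Λ X n :=
  PDLT.mono (m := 0) ((ModuleCat.isZero_of_subsingleton
    (ModuleCat.of Λ X)).hasProjectiveDimensionLT_zero) (Nat.zero_le n)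

/-- The map `f` induces bijections on all `Ext` groups, contravariantly, in degrees `≥ n`. -/
def ExtBijFrom (n : ℕ) (f : X →ₗ[Λ] Y) : Prop :=
  ∀ (S : ModuleCat.{u} Λ) (i : ℕ), n ≤ i →
    Function.Bijective (fun e : Ext (ModuleCat.of Λ Y) S i =>
      (Ext.mk₀ (ModuleCat.ofHom f)).comp e (zero_add i))

namespace ExtBijFrom

variable {f : X →ₗ[Λ] Y} {g : Y →ₗ[Λ] Z} {n : ℕ}

theorem comp_apply (f : X →ₗ[Λ] Y) (g : Y →ₗ[Λ] Z) (S : ModuleCat.{u} Λ) (i : ℕ) :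
    (fun e : Ext (ModuleCat.of Λ Z) S i =>
      (Ext.mk₀ (ModuleCat.ofHom (g ∘ₗ f))).comp e (zero_add i)) =
    (fun e : Ext (ModuleCat.of Λ Y) S i =>
      (Ext.mk₀ (ModuleCat.ofHom f)).comp e (zero_add i)) ∘ (fun e : Ext (ModuleCat.of Λ Z) S i =>
      (Ext.mk₀ (ModuleCat.ofHom g)).comp e (zero_add i)) := by
  funext e
  simp [ModuleCat.ofHom_comp, ← Ext.mk₀_comp_mk₀_assoc]

theorem mono {m : ℕ} (h : ExtBijFrom m f) (hmn : m ≤ n) : ExtBijFrom n f :=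
  fun S i hi => h S i (hmn.trans hi)

theorem comp (hg : ExtBijFrom n g) (hf : ExtBijFrom n f) : ExtBijFrom n (g ∘ₗ f) := by
  intro S i hi
  rw [comp_apply]
  exact (hf S i hi).comp (hg S i hi)

theorem of_comp_left (hgf : ExtBijFrom n (g ∘ₗ f)) (hg : ExtBijFrom n g) : ExtBijFrom n f := by
  intro S i hi
  have := hgf S i hi
  rw [comp_apply] at this
  exact (Function.Bijective.of_comp_iff _ (hg S i hi)).1 this

theorem of_comp_right (hgf : ExtBijFrom n (g ∘ₗ f)) (hf : ExtBijFrom n f) : ExtBijFrom n g := by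
  intro S i hi
  have := hgf S i hi
  rw [comp_apply] at this
  exact (Function.Bijective.of_comp_iff' (hf S i hi) _).1 this

theorem id : ExtBijFrom n (LinearMap.id : X →ₗ[Λ] X) := by
  intro S i hi
  convert Function.bijective_id using 1
  funext e
  exact Ext.mk₀_id_comp e

theorem of_equiv (e : X ≃ₗ[Λ] Y) : ExtBijFrom n e.toLinearMap := by
  intro S i hi
  refine ⟨Function.LeftInverse.injective (g := fun x =>
      (Ext.mk₀ (ModuleCat.ofHom e.symm.toLinearMap)).comp x (zero_add i)) ?_,
     Function.RightInverse.surjective (g := fun x =>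
      (Ext.mk₀ (ModuleCat.ofHom e.symm.toLinearMap)).comp x (zero_add i)) ?_⟩ <;>
  · intro x
    simp only [Ext.mk₀_comp_mk₀_assoc, ← ModuleCat.ofHom_comp]
    simp [Ext.mk₀_id_comp]

theorem pow {f : X →ₗ[Λ] X} (hf : ExtBijFrom n f) (k : ℕ) : ExtBijFrom n (f ^ k) := by
  induction k with
  | zero => exact id
  | succ k ih => rw [pow_succ]; exact ih.comp hf

theorem of_pow {f : X →ₗ[Λ] X} {k : ℕ} (hk : k ≠ 0) (hf : ExtBijFrom n (f ^ k)) :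
    ExtBijFrom n f := by
  obtain ⟨k, rfl⟩ := Nat.exists_eq_succ_of_ne_zero hk
  intro S i hi
  have h := hf S i hi
  constructor
  · have h' := h.1
    rw [Nat.succ_eq_add_one, pow_succ', Module.End.mul_eq_comp, comp_apply] at h'
    exact h'.of_comp
  · have h' := h.2
    rw [Nat.succ_eq_add_one, pow_succ, Module.End.mul_eq_comp, comp_apply] at h'
    exact h'.of_comp

theorem of_pdlt_coker (h : IsSES f g) (hZ : PDLT Λ Z n) : ExtBijFrom n f := by
  intro S i hi
  constructor
  · intro x y hxy
    rw [← sub_eq_zero]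
    obtain ⟨z, hz⟩ := Ext.contravariant_sequence_exact₂ h.shortExact S (x - y)
      ((map_sub ((Ext.mk₀ (ModuleCat.ofHom f)).precomp S (zero_add _)) x y).trans
        (sub_eq_zero.2 hxy))
    rw [← hz, z.eq_zero_of_hasProjectiveDimensionLT n hi, Ext.comp_zero]
  · intro x
    exact Ext.contravariant_sequence_exact₁ h.shortExact S x (add_comm _ _)
      (Ext.eq_zero_of_hasProjectiveDimensionLT _ n (by lia))

theorem of_pdlt_ker (h : IsSES f g) (hX : PDLT Λ X n) : ExtBijFrom (n + 1) g := by
  rintro S (_ | i) hi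
  · simp at hi
  constructor
  · intro x y hxy
    rw [← sub_eq_zero]
    obtain ⟨z, hz⟩ := Ext.contravariant_sequence_exact₃ h.shortExact S (x - y)
      ((map_sub ((Ext.mk₀ (ModuleCat.ofHom g)).precomp S (zero_add _)) x y).trans
        (sub_eq_zero.2 hxy)) (add_comm _ _)
    rw [← hz, z.eq_zero_of_hasProjectiveDimensionLT n (by lia), Ext.comp_zero]
  · intro x
    exact Ext.contravariant_sequence_exact₂ h.shortExact S x
      (Ext.eq_zero_of_hasProjectiveDimensionLT _ n (by lia))

theorem pdlt_coker (h : IsSES f g) (hf : ExtBijFrom n f) : PDLT Λ Z (n + 1) := by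
  rw [PDLT, hasProjectiveDimensionLT_iff]
  rintro (_ | i) hi S x
  · simp at hi
  obtain ⟨z, hz⟩ := Ext.contravariant_sequence_exact₃ h.shortExact S x
    ((hf S (i + 1) (by lia)).1 (by
      simp only [Ext.comp_zero]
      rw [Ext.mk₀_comp_mk₀_assoc, ← ModuleCat.ofHom_comp, h.exact.linearMap_comp_eq_zero]
      rw [show ModuleCat.ofHom (0 : X →ₗ[Λ] Z) = 0 from rfl, Ext.mk₀_zero, Ext.zero_comp]))
      (add_comm 1 i)
  obtain ⟨y, hy⟩ := (hf S i (by lia)).2 z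
  rw [← hz, ← hy]
  exact h.shortExact.extClass_comp_assoc _

end ExtBijFrom

theorem ExtBijFrom.pdlt_of_comp_eq_zero {n : ℕ} {i : X →ₗ[Λ] Y} {p : Y →ₗ[Λ] X}
    (hpi : p ∘ₗ i = LinearMap.id) {f : Y →ₗ[Λ] Z} (hf : ExtBijFrom n f) (hfi : f ∘ₗ i = 0) :
    PDLT Λ X n := by
  rw [PDLT, hasProjectiveDimensionLT_iff]
  intro k hk S x
  obtain ⟨y, hy⟩ := (hf S k hk).2 ((Ext.mk₀ (ModuleCat.ofHom p)).comp x (zero_add k))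
  have h0 := congrFun (ExtBijFrom.comp_apply i f S k) y
  have h1 := congrFun (ExtBijFrom.comp_apply i p S k) x
  simp only [Function.comp_apply, hfi, hpi] at h0 h1 hy
  rw [hy, ← h1] at h0
  rw [show ModuleCat.ofHom (0 : X →ₗ[Λ] Z) = 0 from rfl, Ext.mk₀_zero, Ext.zero_comp] at h0
  exact (Ext.mk₀_id_comp x).symm.trans h0.symm

theorem isSES_inr_fst : IsSES (LinearMap.inr Λ X Y) (LinearMap.fst Λ X Y) where
  inj := LinearMap.inr_injective
  exact := Function.Exact.inr_fst
  surj := LinearMap.fst_surjective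

theorem isSES_inl_snd : IsSES (LinearMap.inl Λ X Y) (LinearMap.snd Λ X Y) where
  inj := LinearMap.inl_injective
  exact := Function.Exact.inl_snd
  surj := LinearMap.snd_surjective

theorem isSES_ker (g : X →ₗ[Λ] Y) (hg : Function.Surjective g) :
    IsSES (LinearMap.ker g).subtype g where
  inj := Submodule.injective_subtype _
  exact := LinearMap.exact_subtype_ker_map g
  surj := hg

theorem ExtBijFrom.of_isCompl_ker_range {ψ : Module.End Λ X}
    (hc : IsCompl (LinearMap.ker ψ) (LinearMap.range ψ)) {n : ℕ}
    (hn : PDLT Λ (LinearMap.ker ψ) n) : ExtBijFrom (n + 1) ψ := by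
  have h1 : ExtBijFrom (n + 1) ψ.rangeRestrict := by
    refine .of_pdlt_ker (isSES_ker _ ψ.surjective_rangeRestrict) ?_
    rwa [LinearMap.ker_rangeRestrict]
  have h2 : ExtBijFrom n (LinearMap.range ψ).subtype := by
    refine .of_pdlt_coker (g := Submodule.projectionOnto _ _ hc)
      ⟨Submodule.injective_subtype _, ?_, Submodule.projectionOnto_surjective hc⟩ hn
    rw [LinearMap.exact_iff, Submodule.ker_projectionOnto, Submodule.range_subtype]
  have h3 := (h2.mono (Nat.le_succ n)).comp h1
  rwa [LinearMap.rangeRestrict, LinearMap.subtype_comp_codRestrict] at h3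

theorem ExtBijFrom.of_bound_summands [IsArtinian Λ X] [IsNoetherian Λ X] {φ : Module.End Λ X}
    {r n : ℕ} (hφ : ExtBijFrom r φ)
    (hn : ∀ K C : Submodule Λ X, IsCompl K C → (∃ r, PDLT Λ K r) → PDLT Λ K n) :
    ExtBijFrom (n + 1) φ := by
  obtain ⟨k, hk⟩ := Filter.eventually_atTop.1 φ.eventually_isCompl_ker_pow_range_pow
  have hc := hk (k + 1) (Nat.le_succ k)
  refine .of_pow (Nat.succ_ne_zero k) (.of_isCompl_ker_range hc (hn _ _ hc ⟨r, ?_⟩))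
  exact (hφ.pow (k + 1)).pdlt_of_comp_eq_zero (Submodule.projectionOnto_comp_subtype hc)
    (LinearMap.ext fun x => LinearMap.mem_ker.1 x.2)

/-- A short exact sequence `0 → U → V → Z → 0` with `U` and `V` stably isomorphic and `Z` of
finite projective dimension bounds the projective dimension of `Z` by that of the direct
summands of `U`, up to projective summands. -/
theorem IsSES.pdlt_of_stable_equiv {U V P Q : Type u} [AddCommGroup U] [Module Λ U]
    [AddCommGroup V] [Module Λ V] [AddCommGroup P] [Module Λ P] [AddCommGroup Q] [Module Λ Q]
    [Module.Projective Λ P] [Module.Projective Λ Q]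
    [IsArtinian Λ (U × Q)] [IsNoetherian Λ (U × Q)]
    {f : U →ₗ[Λ] V} {g : V →ₗ[Λ] Z} (h : IsSES f g) (e : (U × Q) ≃ₗ[Λ] (V × P)) {n : ℕ}
    (hn : ∀ K C : Submodule Λ (U × Q), IsCompl K C → (∃ r, PDLT Λ K r) → PDLT Λ K n)
    (hZ : ∃ r, PDLT Λ Z r) : PDLT Λ Z (n + 3) := by
  obtain ⟨r, hr⟩ := hZ
  have hfst : ExtBijFrom 2 (LinearMap.fst Λ U Q) :=
    .of_pdlt_ker isSES_inr_fst (pdlt_one_iff.2 inferInstance)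
  have hinl : ExtBijFrom 1 (LinearMap.inl Λ V P) :=
    .of_pdlt_coker isSES_inl_snd (pdlt_one_iff.2 inferInstance)
  have hout {m : ℕ} (hm : 1 ≤ m) : ExtBijFrom m (e.symm.toLinearMap ∘ₗ LinearMap.inl Λ V P) :=
    (ExtBijFrom.of_equiv e.symm).comp (hinl.mono hm)
  have hφ : ExtBijFrom (r + 2)
      ((e.symm.toLinearMap ∘ₗ LinearMap.inl Λ V P) ∘ₗ (f ∘ₗ LinearMap.fst Λ U Q)) :=
    (hout (by lia)).comp (((ExtBijFrom.of_pdlt_coker h hr).mono (by lia)).comp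
      (hfst.mono (by lia)))
  have h4 := (hφ.of_bound_summands hn).mono (Nat.le_succ _)
  exact ((h4.of_comp_left (hout (by lia))).of_comp_right (hfst.mono (by lia))).pdlt_coker h

end Homological

section KrullSchmidt

variable {Λ : Type u} [Ring Λ]

section Retracts

variable {X Y Z W : Type*} [AddCommGroup X] [Module Λ X] [AddCommGroup Y] [Module Λ Y]
  [AddCommGroup Z] [Module Λ Z] [AddCommGroup W] [Module Λ W]

variable (Λ X Y) in
/-- `X` is (isomorphic to) a direct summand of `Y`. -/
def IsRetract : Prop := ∃ (i : X →ₗ[Λ] Y) (p : Y →ₗ[Λ] X), p ∘ₗ i = LinearMap.id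

namespace IsRetract

theorem trans (h : IsRetract Λ X Y) (h' : IsRetract Λ Y Z) : IsRetract Λ X Z := by
  obtain ⟨i, p, hp⟩ := h
  obtain ⟨j, q, hq⟩ := h'
  refine ⟨j ∘ₗ i, p ∘ₗ q, ?_⟩
  rw [LinearMap.comp_assoc, ← LinearMap.comp_assoc _ j q, hq, LinearMap.id_comp, hp]

theorem of_equiv (e : X ≃ₗ[Λ] Y) : IsRetract Λ X Y :=
  ⟨e.toLinearMap, e.symm.toLinearMap, by ext; simp⟩

theorem inl : IsRetract Λ X (X × Y) := ⟨LinearMap.inl Λ X Y, LinearMap.fst Λ X Y, by ext; simp⟩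

theorem inr : IsRetract Λ Y (X × Y) := ⟨LinearMap.inr Λ X Y, LinearMap.snd Λ X Y, by ext; simp⟩

theorem prodMap (h : IsRetract Λ X Y) (h' : IsRetract Λ Z W) :
    IsRetract Λ (X × Z) (Y × W) := by
  obtain ⟨i, p, hp⟩ := h
  obtain ⟨j, q, hq⟩ := h'
  refine ⟨i.prodMap j, p.prodMap q, ?_⟩
  rw [LinearMap.prodMap_comp, hp, hq, LinearMap.prodMap_id]

theorem of_isCompl {K C : Submodule Λ X} (h : IsCompl K C) : IsRetract Λ K X :=
  ⟨K.subtype, K.projectionOnto C h, Submodule.projectionOnto_comp_subtype h⟩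

theorem finite (h : IsRetract Λ X Y) [Module.Finite Λ Y] : Module.Finite Λ X := by
  obtain ⟨i, p, hp⟩ := h
  exact Module.Finite.of_surjective p fun x => ⟨i x, LinearMap.congr_fun hp x⟩

theorem exists_prod_equiv {X Y : Type u} [AddCommGroup X] [Module Λ X] [AddCommGroup Y]
    [Module Λ Y] (h : IsRetract Λ X Y) :
    ∃ D : ModuleCat.{u} Λ, Nonempty ((X × D) ≃ₗ[Λ] Y) := by
  obtain ⟨i, p, hp⟩ := h
  have hpi (x : X) : p (i x) = x := LinearMap.congr_fun hp x
  refine ⟨ModuleCat.of Λ (LinearMap.ker p), ⟨LinearEquiv.ofBijective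
    (i.coprod (LinearMap.ker p).subtype) ⟨?_, ?_⟩⟩⟩
  · rw [injective_iff_map_eq_zero]
    rintro ⟨x, y, hy⟩ h
    have h' : i x + y = 0 := by simpa using h
    have hx : x = 0 := by
      have := congrArg p h'
      rwa [map_add, hpi, LinearMap.mem_ker.1 hy, add_zero, map_zero] at this
    subst hx
    simpa using h'
  · intro y
    refine ⟨(p y, ⟨y - i (p y), ?_⟩), ?_⟩
    · simp [hpi]
    · simp

end IsRetract

end Retracts

theorem PDLT.of_isRetract {X Y : Type u} [AddCommGroup X] [Module Λ X] [AddCommGroup Y]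
    [Module Λ Y] {n : ℕ} (h : PDLT Λ Y n) (hXY : IsRetract Λ X Y) : PDLT Λ X n :=
  h.of_retract hXY.choose hXY.choose_spec.choose hXY.choose_spec.choose_spec

theorem ModIndec.isUnit_or_isNilpotent {N : ModuleCat.{u} Λ} (hN : ModIndec Λ N)
    [IsArtinian Λ N] [IsNoetherian Λ N] (f : Module.End Λ N) : IsUnit f ∨ IsNilpotent f := by
  obtain ⟨k, hk⟩ := Filter.eventually_atTop.1 f.eventually_isCompl_ker_pow_range_pow
  have hc := hk (k + 1) (Nat.le_succ k)
  rcases hN.2 _ _ hc with h | h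
  · left
    have h2 := hc.sup_eq_top
    rw [h, bot_sup_eq, LinearMap.range_eq_top] at h2
    rw [LinearMap.ker_eq_bot] at h
    exact (isUnit_pow_iff (Nat.succ_ne_zero k)).1 ((Module.End.isUnit_iff _).2 ⟨h, h2⟩)
  · exact .inr ⟨k + 1, LinearMap.range_eq_bot.1 h⟩

theorem ModIndec.isUnit_of_add {N : ModuleCat.{u} Λ} (hN : ModIndec Λ N)
    [IsArtinian Λ N] [IsNoetherian Λ N] {f g : Module.End Λ N} (h : IsUnit (f + g)) :
    IsUnit f ∨ IsUnit g := by
  obtain ⟨v, hv⟩ := h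
  rcases hN.isUnit_or_isNilpotent (↑v⁻¹ * f) with h1 | h1
  · left
    simpa using v.isUnit.mul h1
  · right
    have h2 : (↑v⁻¹ : Module.End Λ N) * g = 1 - ↑v⁻¹ * f := by
      rw [eq_sub_iff_add_eq', ← mul_add, ← hv, Units.inv_mul]
    have h3 : IsUnit ((↑v⁻¹ : Module.End Λ N) * g) := h2 ▸ h1.isUnit_one_sub
    simpa using v.isUnit.mul h3

theorem ModIndec.exists_isUnit_of_sum {N : ModuleCat.{u} Λ} (hN : ModIndec Λ N)
    [IsArtinian Λ N] [IsNoetherian Λ N] {ι : Type*} (s : Finset ι) (f : ι → Module.End Λ N)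
    (h : IsUnit (∑ j ∈ s, f j)) : ∃ j ∈ s, IsUnit (f j) := by
  classical
  induction s using Finset.induction_on with
  | empty =>
    have := hN.1
    simp at h
  | insert a s ha ih =>
    rw [Finset.sum_insert ha] at h
    rcases hN.isUnit_of_add h with h | h
    · exact ⟨a, by simp, h⟩
    · obtain ⟨j, hj, hu⟩ := ih h
      exact ⟨j, by simp [hj], hu⟩

theorem IsRetract.of_isUnit {X Y : Type*} [AddCommGroup X] [Module Λ X] [AddCommGroup Y]
    [Module Λ Y] (i : X →ₗ[Λ] Y) (p : Y →ₗ[Λ] X) (h : IsUnit (p ∘ₗ i : Module.End Λ X)) :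
    IsRetract Λ X Y := by
  obtain ⟨v, hv⟩ := h
  refine ⟨i, (↑v⁻¹ : Module.End Λ X) ∘ₗ p, ?_⟩
  rw [LinearMap.comp_assoc, ← hv]
  exact v.inv_mul

theorem ModIndec.isRetract_of_pi {N : ModuleCat.{u} Λ} (hN : ModIndec Λ N)
    [IsArtinian Λ N] [IsNoetherian Λ N] {M : Type*} [AddCommGroup M] [Module Λ M] {k : ℕ}
    (h : IsRetract Λ N (Fin k → M)) : IsRetract Λ N M := by
  obtain ⟨i, p, hp⟩ := h
  obtain ⟨j, -, hj⟩ := hN.exists_isUnit_of_sum Finset.univ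
    (fun j => (p ∘ₗ LinearMap.single Λ (fun _ => M) j) ∘ₗ (LinearMap.proj j ∘ₗ i)) (by
      convert isUnit_one
      ext x
      simp only [LinearMap.sum_apply, LinearMap.comp_apply]
      have hsum : ∑ j, LinearMap.single Λ (fun _ => M) j
          ((LinearMap.proj j : (Fin k → M) →ₗ[Λ] M) (i x)) = i x := by
        simpa using Finset.univ_sum_single (i x)
      rw [← map_sum, hsum]
      exact LinearMap.congr_fun hp x)
  exact .of_isUnit _ _ hj

theorem ModIndec.isRetract_of_prod {N : ModuleCat.{u} Λ} (hN : ModIndec Λ N)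
    [IsArtinian Λ N] [IsNoetherian Λ N] {X Y : Type*} [AddCommGroup X] [Module Λ X]
    [AddCommGroup Y] [Module Λ Y] (h : IsRetract Λ N (X × Y)) :
    IsRetract Λ N X ∨ IsRetract Λ N Y := by
  obtain ⟨i, p, hp⟩ := h
  have h : IsUnit (((p ∘ₗ LinearMap.inl Λ X Y) ∘ₗ (LinearMap.fst Λ X Y ∘ₗ i) : Module.End Λ N) +
      (p ∘ₗ LinearMap.inr Λ X Y) ∘ₗ (LinearMap.snd Λ X Y ∘ₗ i)) := by
    convert isUnit_one
    ext x
    simp only [LinearMap.add_apply, LinearMap.comp_apply, ← map_add]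
    simpa using LinearMap.congr_fun hp x
  exact (hN.isUnit_of_add h).imp (.of_isUnit _ _) (.of_isUnit _ _)

theorem ModIndec.nonempty_equiv {N X : ModuleCat.{u} Λ} (hN : ModIndec Λ N)
    (hX : ModIndec Λ X) (h : IsRetract Λ N X) : Nonempty (N ≃ₗ[Λ] X) := by
  obtain ⟨i, p, hp⟩ := h
  have hpi (x : N) : p (i x) = x := LinearMap.congr_fun hp x
  have hi : Function.Injective i := Function.LeftInverse.injective hpi
  have hc : IsCompl (LinearMap.range i) (LinearMap.ker p) := by
    constructor
    · rw [Submodule.disjoint_def]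
      rintro _ ⟨x, rfl⟩ hx
      rw [← hpi x, LinearMap.mem_ker.1 hx, map_zero]
    · rw [codisjoint_iff, eq_top_iff]
      intro x _
      rw [← add_sub_cancel (i (p x)) x]
      exact Submodule.add_mem_sup ⟨_, rfl⟩ (by simp [hpi])
  refine ⟨LinearEquiv.ofBijective i ⟨hi, ?_⟩⟩
  rcases hX.2 _ _ hc with h | h
  · have := hN.1
    obtain ⟨x, hx⟩ := exists_ne (0 : N)
    rw [LinearMap.range_eq_bot] at h
    exact absurd (by rw [← hpi x, h]; simp) hx
  · rw [h] at hc
    rw [← LinearMap.range_eq_top, ← hc.sup_eq_top, sup_bot_eq]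

/-- `DirectSumOf T X`: the module `X` is a finite direct sum of members of `T`. -/
inductive DirectSumOf (T : Set (ModuleCat.{u} Λ)) : ModuleCat.{u} Λ → Prop
  | zero (X : ModuleCat.{u} Λ) : Subsingleton X → DirectSumOf T X
  | cons (N X Y : ModuleCat.{u} Λ) : N ∈ T → DirectSumOf T X → ((N × X) ≃ₗ[Λ] Y) →
      DirectSumOf T Y

theorem DirectSumOf.mono {T T' : Set (ModuleCat.{u} Λ)} (hT : T ⊆ T') {X : ModuleCat.{u} Λ}
    (h : DirectSumOf T X) : DirectSumOf T' X := by
  induction h with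
  | zero X h => exact .zero X h
  | cons N X Y hN _ e ih => exact .cons N X Y (hT hN) ih e

theorem DirectSumOf.exists_finite {T : Set (ModuleCat.{u} Λ)} {X : ModuleCat.{u} Λ}
    (h : DirectSumOf T X) : ∃ T' ⊆ T, T'.Finite ∧ DirectSumOf T' X := by
  induction h with
  | zero X h => exact ⟨∅, by simp, by simp, .zero X h⟩
  | cons N X Y hN _ e ih =>
    obtain ⟨T', hT', hf, h⟩ := ih
    exact ⟨insert N T', Set.insert_subset hN hT', hf.insert N,
      .cons N X Y (by simp) (h.mono (by simp)) e⟩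

theorem exists_isCompl_modIndec (X : ModuleCat.{u} Λ) [IsArtinian Λ X] [Nontrivial X] :
    ∃ N C : Submodule Λ X, IsCompl N C ∧ ModIndec Λ (ModuleCat.of Λ N) := by
  obtain ⟨N, ⟨hN, C, hC⟩, hmin⟩ := IsArtinian.set_has_minimal
    {N : Submodule Λ X | N ≠ ⊥ ∧ ∃ C, IsCompl N C} ⟨⊤, top_ne_bot, ⊥, isCompl_top_bot⟩
  refine ⟨N, C, hC, (Submodule.nontrivial_iff_ne_bot (p := N)).2 hN, fun a b hab => ?_⟩
  change Submodule Λ N at a b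
  by_cases ha : a = ⊥
  · exact .inl ha
  right
  have hinj := Submodule.injective_subtype N
  have hsup : a.map N.subtype ⊔ b.map N.subtype = N := by
    rw [← Submodule.map_sup, hab.sup_eq_top, Submodule.map_subtype_top]
  have hdisj : Disjoint (a.map N.subtype) (b.map N.subtype) :=
    (Submodule.disjoint_map hinj hab.disjoint)
  have hcompl : IsCompl (a.map N.subtype) (b.map N.subtype ⊔ C) := by
    refine ⟨hdisj.disjoint_sup_right_of_disjoint_sup_left (hsup.symm ▸ hC.disjoint), ?_⟩
    rw [codisjoint_iff, ← sup_assoc, hsup, hC.sup_eq_top]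
  have hle : a.map N.subtype ≤ N := Submodule.map_subtype_le N a
  have heq : a.map N.subtype = N := by
    by_contra hne
    refine hmin (a.map N.subtype) ⟨?_, _, hcompl⟩ (lt_of_le_of_ne hle hne)
    rwa [Ne, ← Submodule.map_bot N.subtype, (Submodule.map_injective_of_injective hinj).eq_iff]
  rw [heq] at hdisj
  have hb : b.map N.subtype = ⊥ := (hdisj.symm.eq_bot_of_le (Submodule.map_subtype_le N b))
  rwa [← Submodule.map_bot N.subtype, (Submodule.map_injective_of_injective hinj).eq_iff] at hb

theorem directSumOf_of_retracts {T : Set (ModuleCat.{u} Λ)} (X : ModuleCat.{u} Λ)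
    [IsArtinian Λ X] [IsNoetherian Λ X]
    (h : ∀ N : ModuleCat.{u} Λ, ModIndec Λ N → IsRetract Λ N X →
      ∃ N' ∈ T, Nonempty (N ≃ₗ[Λ] N')) : DirectSumOf T X := by
  induction hl : Module.length Λ X using WellFoundedLT.induction generalizing X with
  | _ l ih =>
    rcases subsingleton_or_nontrivial X with hX | hX
    · exact .zero X hX
    obtain ⟨N, C, hC, hN⟩ := exists_isCompl_modIndec X
    obtain ⟨N', hN', ⟨e⟩⟩ := h _ hN (.of_isCompl hC)
    have hCtop : C ≠ ⊤ := by
      rintro rfl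
      exact (Submodule.nontrivial_iff_ne_bot (p := N)).1 hN.1 (eq_bot_of_isCompl_top hC)
    refine .cons N' (ModuleCat.of Λ C) X hN' (ih _ (hl ▸ Submodule.length_lt hCtop)
      (ModuleCat.of Λ C) (fun M hM hMC => h M hM (hMC.trans (.of_isCompl hC.symm))) rfl) ?_
    exact (e.symm.prodCongr (.refl Λ C)).trans (Submodule.prodEquivOfIsCompl N C hC)

theorem ModIndec.exists_equiv_of_directSumOf {T : Set (ModuleCat.{u} Λ)}
    (hT : ∀ N ∈ T, ModIndec Λ N) {N X : ModuleCat.{u} Λ} (hN : ModIndec Λ N)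
    [IsArtinian Λ N] [IsNoetherian Λ N] (hX : DirectSumOf T X) (h : IsRetract Λ N X) :
    ∃ N' ∈ T, Nonempty (N ≃ₗ[Λ] N') := by
  induction hX with
  | zero X hX =>
    obtain ⟨i, p, hp⟩ := h
    have := hN.1
    obtain ⟨x, hx⟩ := exists_ne (0 : N)
    refine absurd ?_ hx
    rw [← LinearMap.id_apply (R := Λ) x, ← hp, LinearMap.comp_apply, Subsingleton.elim (i x) 0,
      map_zero]
  | cons N' X Y hN' _ e ih =>
    rcases hN.isRetract_of_prod (h.trans (.of_equiv e.symm)) with h | h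
    · exact ⟨N', hN', hN.nonempty_equiv (hT N' hN') h⟩
    · exact ih h

theorem DirectSumOf.exists_pdlt_bound {T : Set (ModuleCat.{u} Λ)} (hT : T.Finite) :
    ∃ n, ∀ X : ModuleCat.{u} Λ, DirectSumOf T X → (∃ r, PDLT Λ X r) → PDLT Λ X n := by
  have h1 (N : ModuleCat.{u} Λ) : ∃ n, (∃ r, PDLT Λ N r) → PDLT Λ N n := by
    by_cases h : ∃ r, PDLT Λ N r
    · exact ⟨h.choose, fun _ => h.choose_spec⟩
    · exact ⟨0, fun h' => absurd h' h⟩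
  choose b hb using h1
  obtain ⟨n, hn⟩ := (hT.image b).bddAbove
  refine ⟨n, fun X hX => ?_⟩
  induction hX with
  | zero X h => exact fun _ => .of_subsingleton n
  | cons N X Y hN _ e ih =>
    rintro ⟨r, hr⟩
    have h2 : PDLT Λ (N × X) r := hr.of_equiv e
    have hN' : PDLT Λ N n := (hb N ⟨r, h2.of_isRetract .inl⟩).mono (hn ⟨N, hN, rfl⟩)
    exact (isSES_inl_snd.pdlt_middle hN' (ih ⟨r, h2.of_isRetract .inr⟩)).of_equiv e.symm

variable [IsArtinianRing Λ] [IsNoetherianRing Λ]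

/-- Krull–Schmidt: the finitely generated direct summands of the powers of a finitely generated
module are direct sums of members of a finite set of modules. -/
theorem exists_finite_directSumOf (M : ModuleCat.{u} Λ) [Module.Finite Λ M] :
    ∃ T : Set (ModuleCat.{u} Λ), T.Finite ∧ (∀ N ∈ T, Module.Finite Λ N) ∧
      ∀ (X : ModuleCat.{u} Λ) (k : ℕ), IsRetract Λ X (Fin k → M) → DirectSumOf T X := by
  have hM : DirectSumOf {N | ModIndec Λ N ∧ Module.Finite Λ N} M :=
    directSumOf_of_retracts M fun N hN h => ⟨N, ⟨hN, h.finite⟩, ⟨.refl _ _⟩⟩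
  obtain ⟨T, hT, hfin, hMT⟩ := hM.exists_finite
  refine ⟨T, hfin, fun N hN => (hT hN).2, fun X k hX => ?_⟩
  have := hX.finite
  refine directSumOf_of_retracts X fun N hN h => ?_
  have := h.finite
  exact hN.exists_equiv_of_directSumOf (fun N' hN' => (hT hN').1) hMT
    (hN.isRetract_of_pi (h.trans hX))

end KrullSchmidt

section Stable

variable {Λ : Type u} [Ring Λ]
variable {X Y Z W P Q : Type u} [AddCommGroup X] [Module Λ X] [AddCommGroup Y] [Module Λ Y]
  [AddCommGroup Z] [Module Λ Z] [AddCommGroup W] [Module Λ W] [AddCommGroup P] [Module Λ P]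
  [AddCommGroup Q] [Module Λ Q]

/-- Schanuel's lemma. -/
theorem exists_schanuel [Module.Projective Λ P] [Module.Projective Λ Q] {f : P →ₗ[Λ] X}
    {g : Q →ₗ[Λ] X} (hf : Function.Surjective f) (hg : Function.Surjective g) :
    Nonempty ((LinearMap.ker f × Q) ≃ₗ[Λ] (LinearMap.ker g × P)) := by
  obtain ⟨a, ha⟩ := Module.projective_lifting_property g f hg
  obtain ⟨b, hb⟩ := Module.projective_lifting_property f g hf
  have ha' (p : P) : g (a p) = f p := LinearMap.congr_fun ha p
  have hb' (q : Q) : f (b q) = g q := LinearMap.congr_fun hb q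
  refine ⟨{
    toFun x := (⟨x.2 - a (x.1 + b x.2), by simp [ha', hb']⟩, x.1 + b x.2)
    invFun y := (⟨y.2 - b (y.1 + a y.2), by simp [ha', hb']⟩, y.1 + a y.2)
    map_add' := ?_
    map_smul' := ?_
    left_inv := ?_
    right_inv := ?_ }⟩
  · rintro ⟨⟨k, hk⟩, q⟩ ⟨⟨k', hk'⟩, q'⟩
    ext <;> simp <;> abel
  · rintro c ⟨⟨k, hk⟩, q⟩
    ext <;> simp [smul_sub, smul_add]
  · rintro ⟨⟨k, hk⟩, q⟩
    ext <;> simp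
  · rintro ⟨⟨k, hk⟩, q⟩
    ext <;> simp

/-- The kernel of a product of linear maps is the product of the kernels. -/
def kerProdMapEquiv (f : X →ₗ[Λ] Y) (g : Z →ₗ[Λ] W) :
    LinearMap.ker (f.prodMap g) ≃ₗ[Λ] LinearMap.ker f × LinearMap.ker g where
  toFun x := (⟨x.1.1, congrArg Prod.fst x.2⟩, ⟨x.1.2, congrArg Prod.snd x.2⟩)
  invFun y := ⟨(y.1, y.2), Prod.ext y.1.2 y.2.2⟩
  map_add' _ _ := rfl
  map_smul' _ _ := rfl
  left_inv _ := rfl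
  right_inv _ := rfl

variable (Λ X Y) in
/-- Two modules are stably isomorphic if they become isomorphic after adding finitely generated
projective modules. -/
def StablyIso : Prop :=
  ∃ P Q : ModuleCat.{u} Λ, (Module.Projective Λ P ∧ Module.Finite Λ P) ∧
    (Module.Projective Λ Q ∧ Module.Finite Λ Q) ∧ Nonempty ((X × P) ≃ₗ[Λ] (Y × Q))

namespace StablyIso

theorem of_equiv (e : X ≃ₗ[Λ] Y) : StablyIso Λ X Y :=
  ⟨ModuleCat.of Λ PUnit, ModuleCat.of Λ PUnit, ⟨inferInstance, inferInstance⟩,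
    ⟨inferInstance, inferInstance⟩, ⟨e.prodCongr (.refl _ _)⟩⟩

theorem symm (h : StablyIso Λ X Y) : StablyIso Λ Y X := by
  obtain ⟨P, Q, hP, hQ, ⟨e⟩⟩ := h
  exact ⟨Q, P, hQ, hP, ⟨e.symm⟩⟩

theorem trans (h : StablyIso Λ X Y) (h' : StablyIso Λ Y Z) : StablyIso Λ X Z := by
  obtain ⟨P, Q, ⟨_, _⟩, ⟨_, _⟩, ⟨e⟩⟩ := h
  obtain ⟨P', Q', ⟨_, _⟩, ⟨_, _⟩, ⟨e'⟩⟩ := h'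
  refine ⟨ModuleCat.of Λ (P × P'), ModuleCat.of Λ (Q' × Q),
    ⟨(inferInstance : Module.Projective Λ (P × P')), (inferInstance : Module.Finite Λ (P × P'))⟩,
    ⟨(inferInstance : Module.Projective Λ (Q' × Q)), (inferInstance : Module.Finite Λ (Q' × Q))⟩,
    ⟨?_⟩⟩
  exact (LinearEquiv.prodAssoc Λ X P P').symm ≪≫ₗ e.prodCongr (.refl Λ P') ≪≫ₗ
    LinearEquiv.prodAssoc Λ Y Q P' ≪≫ₗ
    (LinearEquiv.refl Λ Y).prodCongr (LinearEquiv.prodComm Λ Q P') ≪≫ₗ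
    (LinearEquiv.prodAssoc Λ Y P' Q).symm ≪≫ₗ e'.prodCongr (.refl Λ Q) ≪≫ₗ
    LinearEquiv.prodAssoc Λ Z Q' Q

theorem prod (h : StablyIso Λ X Y) (h' : StablyIso Λ Z W) : StablyIso Λ (X × Z) (Y × W) := by
  obtain ⟨P, Q, ⟨_, _⟩, ⟨_, _⟩, ⟨e⟩⟩ := h
  obtain ⟨P', Q', ⟨_, _⟩, ⟨_, _⟩, ⟨e'⟩⟩ := h'
  refine ⟨ModuleCat.of Λ (P × P'), ModuleCat.of Λ (Q × Q'),
    ⟨(inferInstance : Module.Projective Λ (P × P')), (inferInstance : Module.Finite Λ (P × P'))⟩,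
    ⟨(inferInstance : Module.Projective Λ (Q × Q')), (inferInstance : Module.Finite Λ (Q × Q'))⟩,
    ⟨?_⟩⟩
  exact LinearEquiv.prodProdProdComm Λ X Z P P' ≪≫ₗ e.prodCongr e' ≪≫ₗ
    LinearEquiv.prodProdProdComm Λ Y Q W Q'

theorem of_prod_projective [Module.Projective Λ P] [Module.Finite Λ P] :
    StablyIso Λ (X × P) X :=
  ⟨ModuleCat.of Λ PUnit, ModuleCat.of Λ P, ⟨inferInstance, inferInstance⟩,
    ⟨‹_›, ‹_›⟩, ⟨LinearEquiv.prodUnique (R := Λ) (M := X × P) (M₂ := PUnit.{u + 1})⟩⟩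

theorem ker [Module.Projective Λ P] [Module.Finite Λ P] [Module.Projective Λ Q]
    [Module.Finite Λ Q] (h : StablyIso Λ X Y) {f : P →ₗ[Λ] X} {g : Q →ₗ[Λ] Y}
    (hf : Function.Surjective f) (hg : Function.Surjective g) :
    StablyIso Λ (LinearMap.ker f) (LinearMap.ker g) := by
  obtain ⟨P', Q', ⟨_, _⟩, ⟨_, _⟩, ⟨e⟩⟩ := h
  have hf' : Function.Surjective (e.toLinearMap ∘ₗ f.prodMap (LinearMap.id : P' →ₗ[Λ] P')) :=
    e.surjective.comp (hf.prodMap Function.surjective_id)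
  have hg' : Function.Surjective (g.prodMap (LinearMap.id : Q' →ₗ[Λ] Q')) :=
    hg.prodMap Function.surjective_id
  have key {A B C : Type u} [AddCommGroup A] [Module Λ A] [AddCommGroup B] [Module Λ B]
      [AddCommGroup C] [Module Λ C] (f : A →ₗ[Λ] B) :
      Nonempty (LinearMap.ker (f.prodMap (LinearMap.id : C →ₗ[Λ] C)) ≃ₗ[Λ] LinearMap.ker f) := by
    refine ⟨kerProdMapEquiv f LinearMap.id ≪≫ₗ ?_⟩
    have : Unique (LinearMap.ker (LinearMap.id : C →ₗ[Λ] C)) := by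
      rw [LinearMap.ker_id]; infer_instance
    exact LinearEquiv.prodUnique
  obtain ⟨e1⟩ := key (C := P') f
  obtain ⟨e2⟩ := key (C := Q') g
  obtain ⟨e3⟩ := exists_schanuel hf' hg'
  rw [LinearEquiv.ker_comp] at e3
  exact (of_equiv e1.symm).trans <| of_prod_projective.symm.trans <| (of_equiv e3).trans <|
    of_prod_projective.trans (of_equiv e2)

end StablyIso

variable (Λ) in
/-- Stable isomorphism as an equivalence relation on finitely generated modules. -/
def stableSetoid : Setoid {X : ModuleCat.{u} Λ // Module.Finite Λ X} where
  r X Y := StablyIso Λ X.1 Y.1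
  iseqv := ⟨fun X => .of_equiv (.refl Λ X.1), .symm, .trans⟩

variable (Λ) in
/-- The commutative monoid of stable isomorphism classes of finitely generated modules. -/
def StableClass : Type (u + 1) := Quotient (stableSetoid Λ)

namespace StableClass

variable (Λ X) in
/-- The stable class of a finitely generated module. -/
def cls [h : Module.Finite Λ X] : StableClass Λ :=
  Quotient.mk (stableSetoid Λ) ⟨ModuleCat.of Λ X, h⟩

theorem cls_eq_iff [Module.Finite Λ X] [Module.Finite Λ Y] :
    cls Λ X = cls Λ Y ↔ StablyIso Λ X Y := Quotient.eq (r := stableSetoid Λ)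

theorem cls_of_equiv [Module.Finite Λ X] [Module.Finite Λ Y] (e : X ≃ₗ[Λ] Y) :
    cls Λ X = cls Λ Y := cls_eq_iff.2 (.of_equiv e)

theorem exists_rep (x : StableClass Λ) :
    ∃ (X : ModuleCat.{u} Λ) (_ : Module.Finite Λ X), cls Λ X = x := by
  induction x using Quotient.inductionOn with
  | h X => exact ⟨X.1, X.2, rfl⟩

instance : Add (StableClass Λ) where
  add := Quotient.map₂ (fun X Y => ⟨ModuleCat.of Λ (X.1 × Y.1), by
    have := X.2; have := Y.2; exact (inferInstance : Module.Finite Λ (X.1 × Y.1))⟩)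
    fun _ _ h _ _ h' => h.prod h'

instance : Zero (StableClass Λ) := ⟨cls Λ PUnit⟩

theorem cls_prod [Module.Finite Λ X] [Module.Finite Λ Y] :
    cls Λ (X × Y) = cls Λ X + cls Λ Y := rfl

theorem cls_of_projective [Module.Projective Λ P] [Module.Finite Λ P] : cls Λ P = 0 :=
  (cls_of_equiv (LinearEquiv.uniqueProd (R := Λ) (M := P) (M₂ := PUnit.{u + 1})).symm).trans
    (cls_eq_iff.2 .of_prod_projective)

instance : AddCommMonoid (StableClass Λ) where
  add_assoc x y z := by
    obtain ⟨X, _, rfl⟩ := exists_rep x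
    obtain ⟨Y, _, rfl⟩ := exists_rep y
    obtain ⟨Z, _, rfl⟩ := exists_rep z
    exact cls_of_equiv (LinearEquiv.prodAssoc Λ X Y Z)
  add_comm x y := by
    obtain ⟨X, _, rfl⟩ := exists_rep x
    obtain ⟨Y, _, rfl⟩ := exists_rep y
    exact cls_of_equiv (LinearEquiv.prodComm Λ X Y)
  zero_add x := by
    obtain ⟨X, _, rfl⟩ := exists_rep x
    exact cls_of_equiv LinearEquiv.uniqueProd
  add_zero x := by
    obtain ⟨X, _, rfl⟩ := exists_rep x
    exact cls_of_equiv LinearEquiv.prodUnique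
  nsmul := nsmulRec

theorem cls_pi [Module.Finite Λ X] (k : ℕ) : cls Λ (Fin k → X) = k • cls Λ X := by
  induction k with
  | zero => rw [zero_nsmul]; exact cls_of_projective
  | succ k ih =>
    rw [succ_nsmul', ← ih, ← cls_prod]
    exact (cls_of_equiv (Fin.consLinearEquiv Λ (fun _ => X))).symm

theorem cls_le_of_isRetract [Module.Finite Λ X] [Module.Finite Λ Y] (h : IsRetract Λ X Y) :
    ∃ d, cls Λ X + d = cls Λ Y := by
  obtain ⟨D, ⟨e⟩⟩ := h.exists_prod_equiv
  have : Module.Finite Λ D := (IsRetract.trans .inr (.of_equiv e)).finite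
  exact ⟨cls Λ D, cls_of_equiv e⟩

theorem exists_isRetract_of_add_eq [Module.Finite Λ X] [Module.Finite Λ Y] {d : StableClass Λ}
    {k : ℕ} (h : cls Λ X + d = k • cls Λ Y) : ∃ l : ℕ, IsRetract Λ X (Fin l → (Y × Λ)) := by
  obtain ⟨D, _, rfl⟩ := exists_rep d
  rw [← cls_pi, ← cls_prod, cls_eq_iff] at h
  obtain ⟨P, Q, -, ⟨_, _⟩, ⟨e⟩⟩ := h
  obtain ⟨n, f, hf⟩ := Module.Finite.exists_fin' Λ Q
  obtain ⟨s, hs⟩ := Module.projective_lifting_property f LinearMap.id hf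
  have hQ : IsRetract Λ Q (Fin n → Λ) := ⟨s, f, hs⟩
  have pad {M : Type u} [AddCommGroup M] [Module Λ M] {a b : ℕ} (hab : a ≤ b) :
      IsRetract Λ (Fin a → M) (Fin b → M) := by
    refine ⟨LinearMap.pi fun j => if h : j.1 < a then LinearMap.proj ⟨j, h⟩ else 0,
      LinearMap.funLeft Λ M (Fin.castLE hab), ?_⟩
    ext
    simp [LinearMap.funLeft]
  refine ⟨max k n, ?_⟩
  have h1 : IsRetract Λ X ((Fin k → Y) × Q) :=
    (IsRetract.inl (Y := D)).trans (IsRetract.inl.trans (.of_equiv e))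
  refine (h1.trans (IsRetract.prodMap (pad (le_max_left k n))
    (hQ.trans (pad (le_max_right k n))))).trans (.of_equiv ?_)
  exact LinearEquiv.symm ({
    Equiv.arrowProdEquivProdArrow (Fin (max k n)) (fun _ => Y) (fun _ => Λ) with
    map_add' _ _ := rfl
    map_smul' _ _ := rfl } : (Fin (max k n) → (Y × Λ)) ≃ₗ[Λ] _)

section Omega

variable [IsNoetherianRing Λ]

variable (Λ) in
/-- The syzygy of a finitely generated module with respect to some finite free cover. -/
noncomputable def freeSyzygy (X : {X : ModuleCat.{u} Λ // Module.Finite Λ X}) :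
    {X : ModuleCat.{u} Λ // Module.Finite Λ X} :=
  haveI := X.2
  ⟨ModuleCat.of Λ (LinearMap.ker (Module.Finite.exists_fin' Λ X.1).choose_spec.choose),
    (inferInstance : Module.Finite Λ
      (LinearMap.ker (Module.Finite.exists_fin' Λ X.1).choose_spec.choose))⟩

variable (Λ) in
/-- The syzygy operator on stable classes, as a function. -/
noncomputable def omegaFun : StableClass Λ → StableClass Λ :=
  Quotient.map (freeSyzygy Λ) fun X Y h => by
    have := X.2
    have := Y.2
    exact StablyIso.ker h (Module.Finite.exists_fin' Λ X.1).choose_spec.choose_spec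
      (Module.Finite.exists_fin' Λ Y.1).choose_spec.choose_spec

theorem omegaFun_cls [Module.Finite Λ X] [Module.Projective Λ P] [Module.Finite Λ P]
    {g : P →ₗ[Λ] X} (hg : Function.Surjective g) :
    omegaFun Λ (cls Λ X) = cls Λ (LinearMap.ker g) :=
  cls_eq_iff.2 <| StablyIso.ker (.of_equiv (.refl Λ X))
    (Module.Finite.exists_fin' Λ X).choose_spec.choose_spec hg

variable (Λ) in
/-- The syzygy operator on stable classes. -/
noncomputable def omega : StableClass Λ →+ StableClass Λ where
  toFun := omegaFun Λ
  map_zero' := by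
    refine (omegaFun_cls (X := PUnit.{u + 1})
      (g := (LinearMap.id : PUnit.{u + 1} →ₗ[Λ] PUnit.{u + 1}))
      Function.surjective_id).trans (cls_of_equiv ?_)
    rw [LinearMap.ker_id]
    exact default
  map_add' x y := by
    obtain ⟨X, _, rfl⟩ := exists_rep x
    obtain ⟨Y, _, rfl⟩ := exists_rep y
    obtain ⟨m, f, hf⟩ := Module.Finite.exists_fin' Λ X
    obtain ⟨n, g, hg⟩ := Module.Finite.exists_fin' Λ Y
    rw [omegaFun_cls hf, omegaFun_cls hg, ← cls_prod, ← cls_prod,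
      omegaFun_cls (g := f.prodMap g) (hf.prodMap hg)]
    exact cls_of_equiv (kerProdMapEquiv f g)

theorem omega_cls [Module.Finite Λ X] [Module.Projective Λ P] [Module.Finite Λ P]
    {g : P →ₗ[Λ] X} (hg : Function.Surjective g) :
    omega Λ (cls Λ X) = cls Λ (LinearMap.ker g) := omegaFun_cls hg

end Omega

end StableClass

end Stable

section IgusaTodorov

section Monoid

variable {S : Type*} [AddCommMonoid S]

/-- `x` is a summand of a multiple of `y`. -/
def SummandOfMultiple (x y : S) : Prop := ∃ (k : ℕ) (d : S), x + d = k • y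

namespace SummandOfMultiple

variable {x y z w : S}

theorem add (h : SummandOfMultiple x z) (h' : SummandOfMultiple y w) :
    SummandOfMultiple (x + y) (z + w) := by
  obtain ⟨k, d, hd⟩ := h
  obtain ⟨l, d', hd'⟩ := h'
  refine ⟨k + l, d + d' + (l • z + k • w), ?_⟩
  rw [add_nsmul, nsmul_add, nsmul_add, ← hd, ← hd']
  abel

theorem zero : SummandOfMultiple 0 x := ⟨0, 0, by simp⟩

theorem add_left (h : SummandOfMultiple x z) : SummandOfMultiple x (y + z) := by
  simpa using zero.add h

theorem add_right (h : SummandOfMultiple x z) : SummandOfMultiple x (z + y) := by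
  simpa using h.add zero

theorem map (h : SummandOfMultiple x y) (f : S →+ S) : SummandOfMultiple (f x) (f y) := by
  obtain ⟨k, d, hd⟩ := h
  exact ⟨k, f d, by rw [← map_add, hd, map_nsmul]⟩

theorem iterate (h : SummandOfMultiple x y) (f : S →+ S) (n : ℕ) :
    SummandOfMultiple (f^[n] x) (f^[n] y) := by
  induction n with
  | zero => exact h
  | succ n ih => simpa only [Function.iterate_succ_apply'] using ih.map f

theorem of_mem_closure (T : Finset S) (h : x ∈ AddSubmonoid.closure (T : Set S)) :
    SummandOfMultiple x (∑ t ∈ T, t) := by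
  classical
  induction h using AddSubmonoid.closure_induction with
  | mem x hx =>
    exact ⟨1, ∑ t ∈ T.erase x, t, by rw [one_nsmul, Finset.add_sum_erase T (fun t => t) hx]⟩
  | zero => exact zero
  | add x y _ _ h h' =>
    obtain ⟨k, d, hd⟩ := h
    obtain ⟨l, d', hd'⟩ := h'
    exact ⟨k + l, d + d', by rw [add_nsmul, ← hd, ← hd']; abel⟩

end SummandOfMultiple

/-- The subgroup of differences of exponent vectors whose values become equal under `Ω^n`. -/
def iterateRelations (Ω : S →+ S) (T : Finset S) (n : ℕ) : AddSubgroup (T → ℤ) where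
  carrier := {z | ∃ v w : T → ℕ, (∀ t, z t = v t - w t) ∧
    Ω^[n] (∑ t, v t • (t : S)) = Ω^[n] (∑ t, w t • (t : S))}
  zero_mem' := ⟨0, 0, by simp, rfl⟩
  add_mem' := by
    rintro a b ⟨v, w, h, e⟩ ⟨v', w', h', e'⟩
    refine ⟨v + v', w + w', fun t => ?_, ?_⟩
    · simp only [Pi.add_apply, h, h']
      push_cast
      ring
    · simp only [Pi.add_apply, add_nsmul, Finset.sum_add_distrib, iterate_map_add, e, e']
  neg_mem' := by
    rintro a ⟨v, w, h, e⟩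
    exact ⟨w, v, fun t => by simp [h], e.symm⟩

theorem iterateRelations_mono (Ω : S →+ S) (T : Finset S) : Monotone (iterateRelations Ω T) := by
  rintro m n hmn z ⟨v, w, h, e⟩
  obtain ⟨k, rfl⟩ := Nat.exists_eq_add_of_le' hmn
  exact ⟨v, w, h, by rw [Function.iterate_add_apply, e, Function.iterate_add_apply]⟩

theorem exists_iterate_eq_of_mem_closure (Ω : S →+ S) (T : Finset S) :
    ∃ φ : ℕ, ∀ x ∈ AddSubmonoid.closure (T : Set S), ∀ y ∈ AddSubmonoid.closure (T : Set S),
      (∃ n, Ω^[n] x = Ω^[n] y) →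
        ∃ c ∈ AddSubmonoid.closure (T : Set S), Ω^[φ] (x + c) = Ω^[φ] (y + c) := by
  obtain ⟨φ, hφ⟩ := monotone_stabilizes_iff_noetherian.2
    (inferInstance : IsNoetherian ℤ (T → ℤ))
    ⟨fun n => AddSubgroup.toIntSubmodule (iterateRelations Ω T n), fun m n h =>
      AddSubgroup.toIntSubmodule.monotone (iterateRelations_mono Ω T h)⟩
  have hle (n : ℕ) : iterateRelations Ω T n ≤ iterateRelations Ω T φ := by
    rcases le_total n φ with h | h
    · exact iterateRelations_mono Ω T h
    · exact (AddSubgroup.toIntSubmodule.injective (hφ n h)).ge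
  have hrep (x : S) (hx : x ∈ AddSubmonoid.closure (T : Set S)) :
      ∃ v : T → ℕ, x = ∑ t, v t • (t : S) := by
    classical
    induction hx using AddSubmonoid.closure_induction with
    | mem x hx =>
      refine ⟨Pi.single ⟨x, hx⟩ 1, ?_⟩
      rw [Finset.sum_eq_single ⟨x, hx⟩] <;> simp +contextual
    | zero => exact ⟨0, by simp⟩
    | add x y _ _ h h' =>
      obtain ⟨v, rfl⟩ := h
      obtain ⟨w, rfl⟩ := h'
      exact ⟨v + w, by simp [add_nsmul, Finset.sum_add_distrib]⟩
  refine ⟨φ, fun x hx y hy ⟨n, hn⟩ => ?_⟩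
  obtain ⟨v, rfl⟩ := hrep x hx
  obtain ⟨w, rfl⟩ := hrep y hy
  obtain ⟨v', w', h, e⟩ := hle n (show (fun t => (v t : ℤ) - w t) ∈ iterateRelations Ω T n from
    ⟨v, w, fun _ => rfl, hn⟩)
  refine ⟨∑ t, w' t • (t : S), sum_mem fun t _ =>
    nsmul_mem (AddSubmonoid.subset_closure t.2) _, ?_⟩
  have hvw : ∑ t, v t • (t : S) + ∑ t, w' t • (t : S) =
      ∑ t, w t • (t : S) + ∑ t, v' t • (t : S) := by
    simp only [← Finset.sum_add_distrib, ← add_nsmul]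
    refine Finset.sum_congr rfl fun t _ => ?_
    congr 1
    have := h t
    lia
  rw [hvw, iterate_map_add, e, ← iterate_map_add]

end Monoid

variable {Λ : Type u} [Ring Λ]

theorem DirectSumOf.cls_mem_closure {T : Set (ModuleCat.{u} Λ)} {X : ModuleCat.{u} Λ}
    (h : DirectSumOf T X) (hX : Module.Finite Λ X) : StableClass.cls Λ X ∈ AddSubmonoid.closure
      {x | ∃ N ∈ T, ∃ _ : Module.Finite Λ N, StableClass.cls Λ N = x} := by
  induction h with
  | zero X h =>
    have : Module.Projective Λ X := pdlt_one_iff.1 (.of_subsingleton 1)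
    rw [StableClass.cls_of_projective]
    exact zero_mem _
  | cons N X Y hN _ e ih =>
    have := IsRetract.finite (IsRetract.inl.trans (.of_equiv e))
    have := IsRetract.finite (IsRetract.inr.trans (.of_equiv e))
    rw [← StableClass.cls_of_equiv e, StableClass.cls_prod]
    exact add_mem (AddSubmonoid.subset_closure ⟨N, hN, ‹_›, rfl⟩) (ih _)

open StableClass

variable {X Y Z C : Type u} [AddCommGroup X] [Module Λ X] [AddCommGroup Y] [Module Λ Y]
  [AddCommGroup Z] [Module Λ Z] [AddCommGroup C] [Module Λ C]
  {f : X →ₗ[Λ] Y} {g : Y →ₗ[Λ] Z}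

theorem SummandOfMultiple.of_isRetract_pi [Module.Finite Λ X] [Module.Finite Λ Y] {k : ℕ}
    (h : IsRetract Λ X (Fin k → Y)) : SummandOfMultiple (cls Λ X) (cls Λ Y) := by
  obtain ⟨d, hd⟩ := cls_le_of_isRetract h
  exact ⟨k, d, hd.trans (cls_pi k)⟩

theorem IsSES.prodMap_id (h : IsSES f g) :
    IsSES (f.prodMap (LinearMap.id : C →ₗ[Λ] C)) (g ∘ₗ LinearMap.fst Λ Y C) where
  inj := h.inj.prodMap Function.injective_id
  exact := by
    rintro ⟨y, c⟩
    simp only [LinearMap.comp_apply, LinearMap.fst_apply, Set.mem_range, Prod.exists,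
      LinearMap.prodMap_apply, LinearMap.id_apply, Prod.mk.injEq]
    rw [h.exact y]
    exact ⟨fun ⟨x, hx⟩ => ⟨x, c, hx, rfl⟩, fun ⟨x, _, hx, _⟩ => ⟨x, hx⟩⟩
  surj := h.surj.comp LinearMap.fst_surjective

variable [IsNoetherianRing Λ]

/-- The horseshoe lemma. -/
theorem IsSES.exists_syzygy (h : IsSES f g) [Module.Finite Λ X] [Module.Finite Λ Y]
    [Module.Finite Λ Z] :
    ∃ (X' Y' Z' : ModuleCat.{u} Λ) (_ : Module.Finite Λ X') (_ : Module.Finite Λ Y')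
      (_ : Module.Finite Λ Z') (f' : X' →ₗ[Λ] Y') (g' : Y' →ₗ[Λ] Z'), IsSES f' g' ∧
      cls Λ X' = omega Λ (cls Λ X) ∧ cls Λ Y' = omega Λ (cls Λ Y) ∧ cls Λ Z' = omega Λ (cls Λ Z) ∧
      (∀ m, PDLT Λ Z' m → PDLT Λ Z (m + 1)) ∧ ∀ m, PDLT Λ Z (m + 2) → PDLT Λ Z' (m + 1) := by
  obtain ⟨a, p, hp⟩ := Module.Finite.exists_fin' Λ X
  obtain ⟨b, q, hq⟩ := Module.Finite.exists_fin' Λ Z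
  obtain ⟨q', hq'⟩ := Module.projective_lifting_property g q h.surj
  have hq'' (x) : g (q' x) = q x := LinearMap.congr_fun hq' x
  have hgf (x) : g (f x) = 0 := h.exact.apply_apply_eq_zero x
  set r := (f ∘ₗ p).coprod q'
  have hrs : Function.Surjective r := by
    intro y
    obtain ⟨v, hv⟩ := hq (g y)
    obtain ⟨x, hx⟩ := (h.exact (y - q' v)).1 (by rw [map_sub, hq'', hv, sub_self])
    obtain ⟨w, rfl⟩ := hp x
    exact ⟨(w, v), by simp [r, hx]⟩
  have hP (n k : ℕ) : PDLT Λ (Fin k → Λ) (n + 1) :=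
    PDLT.mono (pdlt_one_iff.2 inferInstance) (Nat.le_add_left 1 n)
  refine ⟨ModuleCat.of Λ (LinearMap.ker p), ModuleCat.of Λ (LinearMap.ker r),
    ModuleCat.of Λ (LinearMap.ker q), (inferInstance : Module.Finite Λ (LinearMap.ker p)),
    (inferInstance : Module.Finite Λ (LinearMap.ker r)),
    (inferInstance : Module.Finite Λ (LinearMap.ker q)),
    (LinearMap.inl Λ _ _).restrict (p := LinearMap.ker p) (q := LinearMap.ker r)
      fun x hx => by simp [r, LinearMap.mem_ker.1 hx],
    (LinearMap.snd Λ _ _).restrict (p := LinearMap.ker r) (q := LinearMap.ker q)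
      fun x hx => ?_, ⟨?_, ?_, ?_⟩, (omega_cls hp).symm, (omega_cls hrs).symm, (omega_cls hq).symm,
      fun m hm => (isSES_ker q hq).pdlt_right hm (hP m b),
      fun m hm => (isSES_ker q hq).pdlt_left (hP m b) hm⟩
  · have := congrArg g (LinearMap.mem_ker.1 hx)
    simpa [r, hgf, hq''] using this
  · rintro ⟨x, hx⟩ ⟨y, hy⟩ hxy
    exact Subtype.ext (congrArg (fun z => z.1.1) hxy)
  · rintro ⟨⟨v, w⟩, hvw⟩
    constructor
    · intro hw
      have hw : w = 0 := congrArg Subtype.val hw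
      subst hw
      have hv : f (p v) = 0 := by simpa [r] using hvw
      exact ⟨⟨v, h.inj (by rw [hv, map_zero])⟩, rfl⟩
    · rintro ⟨x, hx⟩
      have := congrArg (fun z => z.1.2) hx
      exact Subtype.ext this.symm
  · rintro ⟨w, hw⟩
    obtain ⟨x, hx⟩ := (h.exact (q' w)).1 (by rw [hq'']; exact hw)
    obtain ⟨v, rfl⟩ := hp x
    exact ⟨⟨(-v, w), by simp [r, hx]⟩, rfl⟩

theorem IsSES.iterate_omega_eq (h : IsSES f g) [Module.Finite Λ X] [Module.Finite Λ Y]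
    [Module.Finite Λ Z] {n : ℕ} (hZ : PDLT Λ Z (n + 1)) :
    (omega Λ)^[n] (cls Λ X) = (omega Λ)^[n] (cls Λ Y) := by
  induction n generalizing X Y Z with
  | zero =>
    have := pdlt_one_iff.1 hZ
    obtain ⟨s, hs⟩ := Module.projective_lifting_property g LinearMap.id h.surj
    have e := (h.exact.splitSurjectiveEquiv h.inj ⟨s, hs⟩).1
    rw [Function.iterate_zero, id_eq, id_eq, cls_of_equiv e, cls_prod,
      cls_of_projective (P := Z), add_zero]
  | succ n ih =>
    obtain ⟨X', Y', Z', _, _, _, f', g', h', hX, hY, -, -, hd⟩ := h.exists_syzygy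
    rw [Function.iterate_succ_apply, Function.iterate_succ_apply, ← hX, ← hY]
    exact ih h' (hd n hZ)

theorem IsSES.exists_iterate_syzygy (h : IsSES f g) [Module.Finite Λ X] [Module.Finite Λ Y]
    [Module.Finite Λ Z] (n : ℕ) (hZ : ∃ r, PDLT Λ Z r) :
    ∃ (X' Y' Z' : ModuleCat.{u} Λ) (_ : Module.Finite Λ X') (_ : Module.Finite Λ Y')
      (_ : Module.Finite Λ Z') (f' : X' →ₗ[Λ] Y') (g' : Y' →ₗ[Λ] Z'), IsSES f' g' ∧
      cls Λ X' = (omega Λ)^[n] (cls Λ X) ∧ cls Λ Y' = (omega Λ)^[n] (cls Λ Y) ∧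
      (∃ r, PDLT Λ Z' r) ∧ ∀ m, PDLT Λ Z' m → PDLT Λ Z (m + n) := by
  induction n generalizing X Y Z with
  | zero => exact ⟨ModuleCat.of Λ X, ModuleCat.of Λ Y, ModuleCat.of Λ Z, ‹_›, ‹_›, ‹_›, f, g, h,
      rfl, rfl, hZ, fun _ h => h⟩
  | succ n ih =>
    obtain ⟨X', Y', Z', _, _, _, f', g', h', hX, hY, -, hu, hd⟩ := h.exists_syzygy
    obtain ⟨r, hr⟩ := hZ
    obtain ⟨X₂, Y₂, Z₂, h1, h2, h3, f₂, g₂, h₂, hX₂, hY₂, hZ₂, hu₂⟩ :=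
      ih h' ⟨r + 1, hd r (hr.mono (Nat.le_add_right r 2))⟩
    refine ⟨X₂, Y₂, Z₂, h1, h2, h3, f₂, g₂, h₂, ?_, ?_, hZ₂, fun m hm => hu _ (hu₂ m hm)⟩
    · rw [hX₂, hX, Function.iterate_succ_apply]
    · rw [hY₂, hY, Function.iterate_succ_apply]

variable [IsArtinianRing Λ]

/-- Igusa–Todorov: the cokernels, of finite projective dimension, of the monomorphisms between
modules which are stably summands of powers of a fixed finitely generated module have bounded
projective dimension. -/
theorem exists_pdlt_bound_of_summandOfMultiple (μ : StableClass Λ) :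
    ∃ n, ∀ (X Y Z : ModuleCat.{u} Λ) (_ : Module.Finite Λ X) (_ : Module.Finite Λ Y)
      (_ : Module.Finite Λ Z) (f : X →ₗ[Λ] Y) (g : Y →ₗ[Λ] Z), IsSES f g →
      SummandOfMultiple (cls Λ X) μ → SummandOfMultiple (cls Λ Y) μ → (∃ r, PDLT Λ Z r) →
      PDLT Λ Z n := by
  obtain ⟨M, _, rfl⟩ := exists_rep μ
  have : Module.Finite Λ (ModuleCat.of Λ (M × Λ)) :=
    (inferInstance : Module.Finite Λ (M × Λ))
  obtain ⟨T, hT, -, hadd⟩ := exists_finite_directSumOf (ModuleCat.of Λ (M × Λ))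
  have hfin : {x | ∃ N ∈ T, ∃ _ : Module.Finite Λ N, cls Λ N = x}.Finite := by
    classical
    refine (hT.image fun N : ModuleCat.{u} Λ =>
      if _ : Module.Finite Λ N then cls Λ N else 0).subset ?_
    rintro _ ⟨N, hN, h, rfl⟩
    exact ⟨N, hN, dif_pos h⟩
  obtain ⟨φ, hφ⟩ := exists_iterate_eq_of_mem_closure (omega Λ) hfin.toFinset
  rw [hfin.coe_toFinset] at hφ
  obtain ⟨M', _, hM'⟩ := exists_rep ((omega Λ)^[φ] (cls Λ M + ∑ t ∈ hfin.toFinset, t))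
  have : Module.Finite Λ (ModuleCat.of Λ (M' × Λ)) :=
    (inferInstance : Module.Finite Λ (M' × Λ))
  obtain ⟨T', hT', -, hadd'⟩ := exists_finite_directSumOf (ModuleCat.of Λ (M' × Λ))
  obtain ⟨b, hb⟩ := DirectSumOf.exists_pdlt_bound hT'
  refine ⟨b + 3 + φ, fun X Y Z _ _ _ f g h hX hY hZ => ?_⟩
  have hmem (X : ModuleCat.{u} Λ) [Module.Finite Λ X] (hX : SummandOfMultiple (cls Λ X) (cls Λ M)) :
      cls Λ X ∈ AddSubmonoid.closure {x | ∃ N ∈ T, ∃ _ : Module.Finite Λ N, cls Λ N = x} := by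
    obtain ⟨k, d, hd⟩ := hX
    obtain ⟨l, hl⟩ := exists_isRetract_of_add_eq hd
    exact (hadd X l hl).cls_mem_closure ‹_›
  obtain ⟨r, hr⟩ := hZ
  obtain ⟨c, hc, hcXY⟩ := hφ _ (hmem X hX) _ (hmem Y hY)
    ⟨r, h.iterate_omega_eq (hr.mono (Nat.le_succ r))⟩
  have hcs : SummandOfMultiple c (∑ t ∈ hfin.toFinset, t) :=
    .of_mem_closure _ (by rwa [hfin.coe_toFinset])
  obtain ⟨C, _, rfl⟩ := exists_rep c
  obtain ⟨U, V, Z', _, _, _, f', g', h', hU, hV, hZ', hbd⟩ :=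
    (h.prodMap_id (C := C)).exists_iterate_syzygy φ ⟨r, hr⟩
  rw [cls_prod] at hU hV
  obtain ⟨P, Q, ⟨_, _⟩, ⟨_, _⟩, ⟨e⟩⟩ := cls_eq_iff.1 ((hU.trans hcXY).trans hV.symm)
  obtain ⟨k, d, hd⟩ : SummandOfMultiple (cls Λ (U × P)) (cls Λ M') := by
    rw [cls_prod, cls_of_projective (P := P), add_zero, hU, hM']
    exact (hX.add hcs).iterate _ φ
  obtain ⟨l, hl⟩ := exists_isRetract_of_add_eq hd
  refine hbd _ (h'.pdlt_of_stable_equiv e (fun K C hKC hK => ?_) hZ')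
  exact hb (ModuleCat.of Λ K) (hadd' _ l ((IsRetract.of_isCompl hKC).trans hl)) hK

end IgusaTodorov

section ProjectiveCover

variable {Λ : Type u} [Ring Λ]

theorem pdlt_of_projDimLE {n : ℕ} {M : ModuleCat.{u} Λ} (h : ProjDimLE Λ n M) :
    PDLT Λ M (n + 1) := by
  induction n generalizing M with
  | zero => exact pdlt_one_iff.2 h
  | succ n ih =>
    obtain ⟨P, g, hP, -, hg, hK⟩ := h
    exact (isSES_ker g hg).pdlt_right (ih hK) ((pdlt_one_iff.2 hP).mono (by lia))

theorem projDimLE_of_pdlt [IsNoetherianRing Λ] {n : ℕ} {M : ModuleCat.{u} Λ}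
    [Module.Finite Λ M] (h : PDLT Λ M (n + 1)) : ProjDimLE Λ n M := by
  induction n generalizing M with
  | zero => exact pdlt_one_iff.1 h
  | succ n ih =>
    obtain ⟨k, g, hg⟩ := Module.Finite.exists_fin' Λ M
    have hP : Module.Projective Λ (Fin k → Λ) := inferInstance
    have : Module.Finite Λ (ModuleCat.of Λ (LinearMap.ker g)) :=
      (inferInstance : Module.Finite Λ (LinearMap.ker g))
    exact ⟨ModuleCat.of Λ (Fin k → Λ), g, hP, (inferInstance : Module.Finite Λ (Fin k → Λ)), hg,
      ih ((isSES_ker g hg).pdlt_left ((pdlt_one_iff.2 hP).mono (by lia)) h)⟩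

variable [IsArtinianRing Λ] [IsNoetherianRing Λ]

theorem exists_projective_cover (M : ModuleCat.{u} Λ) [Module.Finite Λ M] :
    ∃ (P : ModuleCat.{u} Λ) (g : P →ₗ[Λ] M), Module.Projective Λ P ∧ Module.Finite Λ P ∧
      Function.Surjective g ∧ IsSuperfluous Λ (LinearMap.ker g) := by
  have key (P : ModuleCat.{u} Λ) (g : P →ₗ[Λ] M) (_ : Module.Projective Λ P)
      (_ : Module.Finite Λ P) (hg : Function.Surjective g) :
      ∃ (P : ModuleCat.{u} Λ) (g : P →ₗ[Λ] M), Module.Projective Λ P ∧ Module.Finite Λ P ∧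
        Function.Surjective g ∧ IsSuperfluous Λ (LinearMap.ker g) := by
    induction hl : Module.length Λ P using WellFoundedLT.induction generalizing P with
    | _ l ih =>
      by_cases hs : IsSuperfluous Λ (LinearMap.ker g)
      · exact ⟨P, g, ‹_›, ‹_›, hg, hs⟩
      unfold IsSuperfluous at hs
      push Not at hs
      obtain ⟨L, hL, hL'⟩ := hs
      have hgL : Function.Surjective (g ∘ₗ L.subtype) := by
        rw [← LinearMap.range_eq_top, LinearMap.range_comp, Submodule.range_subtype,
          ← LinearMap.range_eq_top.2 hg, ← Submodule.map_top, ← hL, Submodule.map_sup,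
          (LinearMap.le_ker_iff_map (f := g)).1 le_rfl, sup_bot_eq]
      obtain ⟨h, hh⟩ := Module.projective_lifting_property (g ∘ₗ L.subtype) g hgL
      set e : Module.End Λ P := L.subtype ∘ₗ h
      have hge (p : P) : g (e p) = g p := LinearMap.congr_fun hh p
      have hgek (k : ℕ) (p : P) : g ((e ^ k) p) = g p := by
        induction k with
        | zero => rfl
        | succ k ihk => rw [pow_succ', Module.End.mul_apply, hge, ihk]
      obtain ⟨k, hk⟩ := Filter.eventually_atTop.1 e.eventually_isCompl_ker_pow_range_pow
      have hc := hk (k + 1) (Nat.le_succ k)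
      have hle : LinearMap.range (e ^ (k + 1)) ≤ L := by
        rintro _ ⟨p, rfl⟩
        rw [pow_succ', Module.End.mul_apply]
        exact (h ((e ^ k) p)).2
      obtain ⟨i, p, hp⟩ := IsRetract.of_isCompl hc.symm
      refine ih _ (hl ▸ Submodule.length_lt (ne_top_of_le_ne_top hL' hle))
        (ModuleCat.of Λ (LinearMap.range (e ^ (k + 1)))) (g ∘ₗ Submodule.subtype _)
        (.of_split i p hp) (IsRetract.finite ⟨i, p, hp⟩) ?_ rfl
      intro x
      obtain ⟨y, rfl⟩ := hg x
      exact ⟨⟨(e ^ (k + 1)) y, y, rfl⟩, hgek (k + 1) y⟩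
  obtain ⟨k, g, hg⟩ := Module.Finite.exists_fin' Λ M
  exact key (ModuleCat.of Λ (Fin k → Λ)) g
    (inferInstance : Module.Projective Λ (Fin k → Λ))
    (inferInstance : Module.Finite Λ (Fin k → Λ)) hg

theorem exists_isNthSyzygy (M : ModuleCat.{u} Λ) [Module.Finite Λ M] (n : ℕ) :
    ∃ (K : ModuleCat.{u} Λ) (_ : Module.Finite Λ K), IsNthSyzygy Λ n K M ∧
      StableClass.cls Λ K = (StableClass.omega Λ)^[n] (StableClass.cls Λ M) := by
  induction n with
  | zero => exact ⟨M, ‹_›, ⟨.refl Λ M⟩, rfl⟩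
  | succ n ih =>
    obtain ⟨K, _, hK, hKM⟩ := ih
    obtain ⟨P, g, _, _, hg, hs⟩ := exists_projective_cover K
    refine ⟨ModuleCat.of Λ (LinearMap.ker g),
      (inferInstance : Module.Finite Λ (LinearMap.ker g)),
      ⟨K, hK, P, g, ‹_›, ‹_›, hg, hs, ⟨.refl Λ _⟩⟩, ?_⟩
    rw [Function.iterate_succ_apply', ← hKM, StableClass.omega_cls hg]

theorem MSyzygyFiniteClass.exists_summandOfMultiple {m : ℕ} {C : ModuleCat.{u} Λ → Prop}
    (h : MSyzygyFiniteClass Λ m C) : ∃ (N : ModuleCat.{u} Λ) (_ : Module.Finite Λ N),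
      ∀ (X : ModuleCat.{u} Λ) [Module.Finite Λ X], C X →
        SummandOfMultiple ((StableClass.omega Λ)^[m] (StableClass.cls Λ X))
          (StableClass.cls Λ N) := by
  obtain ⟨N, hN, h⟩ := h
  refine ⟨N, hN, fun X _ hX => ?_⟩
  obtain ⟨K, _, hK, e⟩ := exists_isNthSyzygy X m
  obtain ⟨k, hk⟩ := h X hX K hK
  rw [← e]
  exact .of_isRetract_pi (k := k) hk

end ProjectiveCover

section Rotation

variable {Λ : Type u} [Ring Λ] [IsNoetherianRing Λ] {X Y Z : Type u} [AddCommGroup X] [Module Λ X]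
  [AddCommGroup Y] [Module Λ Y] [AddCommGroup Z] [Module Λ Z]
  {f : X →ₗ[Λ] Y} {g : Y →ₗ[Λ] Z}

theorem IsSES.exists_rotation (h : IsSES f g) [Module.Finite Λ Z] :
    ∃ (K : ModuleCat.{u} Λ) (_ : Module.Finite Λ K) (n : ℕ) (i : K →ₗ[Λ] X × (Fin n → Λ))
      (j : X × (Fin n → Λ) →ₗ[Λ] Y), IsSES i j ∧
      StableClass.cls Λ K = StableClass.omega Λ (StableClass.cls Λ Z) := by
  obtain ⟨n, q, hq⟩ := Module.Finite.exists_fin' Λ Z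
  obtain ⟨r, hr⟩ := Module.projective_lifting_property g q h.surj
  have hr' (x) : g (r x) = q x := LinearMap.congr_fun hr x
  have hgf (x) : g (f x) = 0 := h.exact.apply_apply_eq_zero x
  have hs : Function.Surjective (f.coprod r) := by
    intro y
    obtain ⟨v, hv⟩ := hq (g y)
    obtain ⟨x, hx⟩ := (h.exact (y - r v)).1 (by rw [map_sub, hr', hv, sub_self])
    exact ⟨(x, v), by simp [hx]⟩
  refine ⟨ModuleCat.of Λ (LinearMap.ker (f.coprod r)), ?_, n, Submodule.subtype _, f.coprod r,
    isSES_ker _ hs, ?_⟩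
  all_goals
    have e : LinearMap.ker (f.coprod r) ≃ₗ[Λ] LinearMap.ker q := by
      refine .ofBijective ((LinearMap.snd Λ X _).restrict
        fun x (hx : f.coprod r x = 0) => ?_) ⟨?_, ?_⟩
      · have := congrArg g hx
        simpa [hgf, hr'] using this
      · rintro ⟨⟨x, v⟩, hx⟩ ⟨⟨y, w⟩, hy⟩ hxy
        have hvw : v = w := congrArg Subtype.val hxy
        subst hvw
        have : f x + r v = f y + r v :=
          (LinearMap.mem_ker.1 hx).trans (LinearMap.mem_ker.1 hy).symm
        exact Subtype.ext (Prod.ext (h.inj (add_right_cancel this)) rfl)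
      · rintro ⟨v, hv⟩
        obtain ⟨x, hx⟩ := (h.exact (r v)).1 (by rw [hr']; exact hv)
        exact ⟨⟨(-x, v), by simp [hx]⟩, rfl⟩
  · exact Module.Finite.equiv e.symm
  · have : Module.Finite Λ (LinearMap.ker (f.coprod r)) := Module.Finite.equiv e.symm
    exact (StableClass.cls_of_equiv e).trans (StableClass.omega_cls hq).symm

end Rotation

section Subalgebra

open StableClass

theorem IsRetract.restrictScalars {A : Type u} [Ring A] (B : Type u) [Ring B] {X Y : Type*}
    [AddCommGroup X] [Module A X] [AddCommGroup Y] [Module A Y] [Module B X] [Module B Y]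
    [LinearMap.CompatibleSMul X Y B A] [LinearMap.CompatibleSMul Y X B A]
    (h : IsRetract A X Y) : IsRetract B X Y := by
  obtain ⟨i, p, hp⟩ := h
  exact ⟨i.restrictScalars B, p.restrictScalars B, LinearMap.ext fun x => LinearMap.congr_fun hp x⟩

theorem finFinDim_of_pdlt_bound {Λ : Type u} [Ring Λ] [IsNoetherianRing Λ] {n : ℕ}
    (h : ∀ (k : ℕ) (X : Submodule Λ (Fin k → Λ)), (∃ r, PDLT Λ X r) → PDLT Λ X n) :
    FinFinDim Λ := by
  refine ⟨n, fun M _ ⟨r, hr⟩ => projDimLE_of_pdlt ?_⟩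
  obtain ⟨k, p, hp⟩ := Module.Finite.exists_fin' Λ M
  have hP (m : ℕ) : PDLT Λ (Fin k → Λ) (m + 1) :=
    (pdlt_one_iff.2 inferInstance).mono (Nat.le_add_left 1 m)
  refine (isSES_ker p hp).pdlt_right (h k _ ⟨r + 1, ?_⟩) (hP n)
  exact (isSES_ker p hp).pdlt_left (hP r)
    (PDLT.mono (pdlt_of_projDimLE hr) (Nat.le_succ (r + 1)))

variable {R : Type u} [CommRing R] {A : Type u} [Ring A] [Algebra R A]

theorem isNoetherianRing_subalgebra [IsArtinianRing R] [Module.Finite R A]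
    (B : Subalgebra R A) : IsNoetherianRing B :=
  isNoetherian_of_tower R (inferInstance : IsNoetherian R (Subalgebra.toSubmodule B))

theorem isArtinianRing_subalgebra [IsArtinianRing R] [Module.Finite R A]
    (B : Subalgebra R A) : IsArtinianRing B :=
  isArtinian_of_tower R (inferInstance : IsArtinian R (Subalgebra.toSubmodule B))

/-- Let `I ⊆ B` be closed under left multiplication by `A`. Every submodule of a free `B`-module
is an extension of a module annihilated by `I` by (the restriction of) a submodule of a free
`A`-module. -/
theorem exists_isSES_of_subset_subalgebra (B : Subalgebra R A) (I : Set A) (hIB : I ⊆ B)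
    (hAI : ∀ (a : A), ∀ x ∈ I, a * x ∈ I) {n : ℕ} (X : Submodule B (Fin n → B)) :
    ∃ (Y : Submodule A (Fin n → A)) (Z : ModuleCat.{u} B) (f : Y →ₗ[B] X) (g : X →ₗ[B] Z),
      IsSES f g ∧ ∀ (x : B), (x : A) ∈ I → ∀ z : Z, x • z = 0 := by
  let ι : (Fin n → B) →ₗ[B] (Fin n → A) :=
    { toFun := fun v j => v j
      map_add' := fun _ _ => rfl
      map_smul' := fun _ _ => rfl }
  have hι : Function.Injective ι := fun v w h => funext fun j => Subtype.ext (congrFun h j)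
  let Y : Submodule A (Fin n → A) := Submodule.span A {w | ∃ x ∈ I, ∃ v ∈ X, w = x • ι v}
  have hY {w : Fin n → A} (hw : w ∈ Y) : ∀ a : A, ∃ v ∈ X, ι v = a • w := by
    induction hw using Submodule.span_induction with
    | mem w hw =>
      obtain ⟨x, hx, v, hv, rfl⟩ := hw
      intro a
      refine ⟨(⟨a * x, hIB (hAI a x hx)⟩ : B) • v, X.smul_mem _ hv, ?_⟩
      rw [map_smul, smul_smul]
      rfl
    | zero => exact fun a => ⟨0, X.zero_mem, by simp⟩
    | add w w' _ _ h h' =>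
      intro a
      obtain ⟨v, hv, e⟩ := h a
      obtain ⟨v', hv', e'⟩ := h' a
      exact ⟨v + v', X.add_mem hv hv', by rw [map_add, e, e', smul_add]⟩
    | smul b w _ h =>
      intro a
      rw [smul_smul]
      exact h (a * b)
  let Y₀ : Submodule B X := (Y.restrictScalars B).comap (ι ∘ₗ X.subtype)
  let e : Y₀ ≃ₗ[B] Y := .ofBijective
    { toFun := fun v => ⟨ι v.1, v.2⟩
      map_add' := fun _ _ => rfl
      map_smul' := fun _ _ => rfl } (by
    constructor
    · intro v w h
      exact Subtype.ext (Subtype.ext (hι (congrArg Subtype.val h)))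
    · rintro ⟨w, hw⟩
      obtain ⟨v, hv, h⟩ := hY hw 1
      rw [one_smul] at h
      exact ⟨⟨⟨v, hv⟩, show ι v ∈ Y from h ▸ hw⟩, Subtype.ext h⟩)
  refine ⟨Y, ModuleCat.of B (X ⧸ Y₀), Y₀.subtype ∘ₗ e.symm.toLinearMap, Y₀.mkQ,
    ⟨Y₀.injective_subtype.comp e.symm.injective, ?_, Y₀.mkQ_surjective⟩, ?_⟩
  · rw [LinearMap.exact_iff, Submodule.ker_mkQ, LinearEquiv.range_comp, Submodule.range_subtype]
  · intro x hx z
    obtain ⟨v, rfl⟩ := Y₀.mkQ_surjective z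
    change Y₀.mkQ (x • v) = 0
    rw [Submodule.mkQ_apply, Submodule.Quotient.mk_eq_zero]
    exact Submodule.subset_span ⟨x, hx, v, v.2, rfl⟩

theorem finFinDim_of_subset_subalgebra [IsArtinianRing R] [Module.Finite R A]
    (B : Subalgebra R A) (I : Set A) (hIB : I ⊆ B)
    (hAI : ∀ (a : A), ∀ x ∈ I, a * x ∈ I) (hA : OneSyzygyFinite A)
    (hB : SyzygyFiniteClass B fun X => Module.Finite B X ∧
      ∀ (x : B), (x : A) ∈ I → ∀ z : X, x • z = 0) : FinFinDim B := by
  have := isNoetherianRing_subalgebra B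
  have := isArtinianRing_subalgebra B
  have : IsNoetherianRing A := isNoetherian_of_tower R inferInstance
  have : IsArtinianRing A := isArtinian_of_tower R inferInstance
  have : Module.Finite B A := Module.Finite.of_restrictScalars_finite R B A
  obtain ⟨m, hm⟩ := hB
  obtain ⟨M, _, hM⟩ := hm.exists_summandOfMultiple
  obtain ⟨N, _, hN⟩ := MSyzygyFiniteClass.exists_summandOfMultiple hA
  have : Module.Finite B (N × A) := Module.Finite.trans A (N × A)
  obtain ⟨b, hb⟩ := exists_pdlt_bound_of_summandOfMultiple
    (omega B (cls B M) + (omega B)^[m] (cls B (N × A)))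
  refine finFinDim_of_pdlt_bound (n := b + m) fun n X hX => ?_
  obtain ⟨Y, Z, f, g, h, hZ⟩ := exists_isSES_of_subset_subalgebra B I hIB hAI X
  have : Module.Finite B Z := Module.Finite.of_surjective g h.surj
  have : Module.Finite B Y := Module.Finite.of_injective f h.inj
  have hYA : SummandOfMultiple (cls A Y) (cls A N) := by
    have : Module.Finite A (ModuleCat.of A ((Fin n → A) ⧸ Y)) :=
      (inferInstance : Module.Finite A ((Fin n → A) ⧸ Y))
    have h := hN (ModuleCat.of A ((Fin n → A) ⧸ Y)) this
    have hk := omega_cls Y.mkQ_surjective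
    have e : LinearMap.ker Y.mkQ ≃ₗ[A] Y := LinearEquiv.ofEq _ _ Y.ker_mkQ
    rw [cls_of_equiv e] at hk
    exact hk ▸ h
  obtain ⟨k, d, hd⟩ := hYA
  obtain ⟨l, hl⟩ := exists_isRetract_of_add_eq hd
  have hYB : SummandOfMultiple (cls B Y) (cls B (N × A)) :=
    .of_isRetract_pi (hl.restrictScalars B)
  obtain ⟨K, _, k, i, j, hij, hK⟩ := h.exists_rotation
  obtain ⟨U, V, X', _, _, _, f', g', h', hU, hV, hX', hbd⟩ := hij.exists_iterate_syzygy m hX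
  refine hbd b (hb U V X' ‹_› ‹_› ‹_› f' g' h' ?_ ?_ hX')
  · rw [hU, hK, ← Function.iterate_succ_apply, Function.iterate_succ_apply']
    exact ((hM Z ⟨‹_›, hZ⟩).map _).add_right
  · rw [hV, cls_prod, cls_of_projective (P := Fin k → B), add_zero]
    exact (hYB.iterate _ m).add_left

theorem radSet_subset (B : Subalgebra R A) : radSet B ⊆ B := by
  rintro _ ⟨x, -, rfl⟩
  exact x.2

theorem prod_mem_of_mem_radSet {s : ℕ} (A' : Fin (s + 1) → Subalgebra R A)
    (hrad : ∀ j : Fin s, ∀ x ∈ radSet (A' j.castSucc), ∀ a ∈ A' j.succ,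
      a * x ∈ radSet (A' j.castSucc)) (x : Fin s → A)
    (hx : ∀ j : Fin s, x j ∈ radSet (A' j.castSucc)) :
    (List.ofFn fun j : Fin s => x j.rev).prod ∈ A' 0 := by
  induction s with
  | zero => simp
  | succ s ih =>
    have h := ih (fun j => A' j.succ) (fun j => hrad j.succ) (fun j => x j.succ)
      (fun j => hx j.succ)
    rw [List.ofFn_succ_last, List.prod_append, List.prod_singleton, Fin.rev_last]
    simp only [Fin.rev_castSucc]
    exact radSet_subset _ (hrad 0 _ (hx 0) _ h)

end Subalgebra

variable {R : Type u} [CommRing R] [IsArtinianRing R]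
  {A : Type u} [Ring A] [Algebra R A] [Module.Finite R A]

/-- Chain of subalgebras `B = A₀ ⊆ ⋯ ⊆ A_s = A` with `rad (A_{i-1})` a left
ideal of `A_i`.  If `A` is 1-syzygy-finite and `B/(rad (A_{s-1}) ⋯ rad (A₀))` is
`B`-syzygy-finite, then `fin.dim B < ∞`. -/
theorem statement3 (s : ℕ) (hs : 0 < s)
    (A' : Fin (s + 1) → Subalgebra R A)
    (hchain : ∀ j : Fin s, A' j.castSucc ≤ A' j.succ)
    (htop : A' (Fin.last s) = ⊤)
    (hrad : ∀ j : Fin s, ∀ x ∈ radSet (A' j.castSucc), ∀ a ∈ A' j.succ,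
      a * x ∈ radSet (A' j.castSucc))
    (h1 : OneSyzygyFinite A)
    (hq : SyzygyFiniteClass ↥(A' 0) (fun X => Module.Finite ↥(A' 0) X ∧
      ∀ x : Fin s → A, (∀ j : Fin s, x j ∈ radSet (A' j.castSucc)) →
        ∀ (hm : (List.ofFn fun j : Fin s => x j.rev).prod ∈ A' 0) (v : X),
          (⟨(List.ofFn fun j : Fin s => x j.rev).prod, hm⟩ : ↥(A' 0)) • v = 0)) :
    FinFinDim ↥(A' 0) := by
  refine finFinDim_of_subset_subalgebra (A' 0)
    {a | ∃ x : Fin s → A, (∀ j, x j ∈ radSet (A' j.castSucc)) ∧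
      a = (List.ofFn fun j : Fin s => x j.rev).prod} ?_ ?_ h1 ?_
  · rintro _ ⟨x, hx, rfl⟩
    exact prod_mem_of_mem_radSet A' hrad x hx
  · rintro a _ ⟨x, hx, rfl⟩
    obtain ⟨s, rfl⟩ := Nat.exists_eq_succ_of_ne_zero hs.ne'
    refine ⟨Function.update x (Fin.last s) (a * x (Fin.last s)), fun j => ?_, ?_⟩
    · by_cases h : j = Fin.last s
      · subst h
        rw [Function.update_self]
        exact hrad _ _ (hx _) a (by rw [Fin.succ_last, htop]; trivial)
      · rw [Function.update_of_ne h]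
        exact hx j
    · have hne (j : Fin s) : j.succ.rev ≠ Fin.last s := by
        rw [← Fin.rev_zero, Fin.rev_injective.ne_iff]
        exact Fin.succ_ne_zero j
      simp only [List.ofFn_succ, List.prod_cons, Fin.rev_zero, Function.update_self,
        Function.update_of_ne (hne _), mul_assoc]
  · obtain ⟨m, N, hN, h⟩ := hq
    refine ⟨m, N, hN, fun X hX K hK => h X ⟨hX.1, fun x hx hm v => ?_⟩ K hK⟩
    exact hX.2 ⟨_, hm⟩ ⟨x, hx, rfl⟩ v
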